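/- arXiv:1911.12108 — 2 statements merged into one kernel-verified Lean document; each statement's English description precedes it below -/
import Mathlib

section
/- For every n ≥ 2 and every positive integer N, the set A_N = {x ∈ ℤ^n : 0 ≤ x_j ≤ N−1 for all j, and x_i = 0 for some i} minimises gap(A) = Σ_{i=1}^n |π_i(A)| − |A| among all weak antichains A in ℤ^n of size |A_N| = N^n − (N−1)^n; that is, every weak antichain A ⊆ ℤ^n with |A| = N^n − (N−1)^n satisfies gap(A) ≥ gap(A_N). -/
/-! Write `M = N - 1`. It has to be shown that `∑ i, |π_i(A)| ≥ n * N ^ (n - 1)`.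

*Compression.* Fix `c` below all coordinates of points of `A`. In each line in direction `i` move
the lowest point to height `c` (`lower`). This keeps the size and does not enlarge any projection
(`card_lower`, `card_flat_lower_le`). Doing so once in every direction turns a weak antichain into
a set `B` of the same size which is closed under replacing any coordinate by `c`, and in which
every point has some coordinate equal to `c`
(`exists_compressed`): a surviving point with no such coordinate would lie strictly above another
point of `A`.

*Counting by support.* Let `e k` be the number of points of `B` with exactly `k` coordinates
different from `c`. Then `∑ e k = |B|` and `∑ i, |π_i(B)| = ∑ (n - k) * e k`, where `k < n`.
For `A_N` the numbers are `C(n, k) * M ^ k`.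

*The key inequality* (`level_step`). For `k ≥ 1` and real `b ≥ 0`, if `e k ≤ C(n, k) * b ^ k` then
`e (k + 1) ≤ C(n, k + 1) * b ^ (k + 1)`. This is a Kruskal–Katona theorem for coloured complexes;
it is proved by induction on the set of coordinates. Splitting by the value of one coordinate
expresses `e k` through the section at `c` and the other sections, which are contained in it; the
induction hypothesis for all of these reduces the claim to
`(k + 1) * a * b ^ k ≤ k * b ^ (k + 1) + a ^ (k + 1)`.

*Conclusion.* By the key inequality the differences `d k = e k - C(n, k) * M ^ k` are nonnegative up
to some index and nonpositive from there on. Since `∑ d k = 0`, weighting by the decreasing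
factor `n - k` gives `∑ (n - k) * d k ≥ 0` (`crossing`). -/

namespace ProjWA

variable {ι : Type*}

/-- `A ⊆ ℤ^ι` is a weak antichain if it contains no `x, y` with `x i < y i` for every `i`. -/
def IsWeakAntichain [Fintype ι] (A : Finset (ι → ℤ)) : Prop :=
  ∀ x ∈ A, ∀ y ∈ A, ¬ ∀ i, x i < y i

/-- The projection deleting the coordinate `i`. -/
def projFun [DecidableEq ι] (i : ι) (x : ι → ℤ) : {j : ι // j ≠ i} → ℤ :=
  fun j => x j.1

/-- The image of a finite set under the projection deleting coordinate `i`. -/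
def proj [Fintype ι] [DecidableEq ι] (i : ι) (A : Finset (ι → ℤ)) :
    Finset ({j : ι // j ≠ i} → ℤ) :=
  A.image (projFun i)

/-- `gap A = Σ_i |π_i(A)| - |A|`. -/
def gap [Fintype ι] [DecidableEq ι] (A : Finset (ι → ℤ)) : ℤ :=
  (∑ i : ι, ((proj i A).card : ℤ)) - A.card

/-- `X_n`: the set of points of `ℤ_{≥0}^ι` having at least one coordinate equal to zero. -/
def XSet (ι : Type*) : Set (ι → ℤ) :=
  {x | (∀ i, 0 ≤ x i) ∧ ∃ i, x i = 0}

/-- A down-set in `ℤ_{≥0}^ι`. -/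
def IsDownSet (A : Finset (ι → ℤ)) : Prop :=
  ∀ x y : ι → ℤ, (∀ i, 0 ≤ x i) → (∀ i, x i ≤ y i) → y ∈ A → x ∈ A

/-- The `i`-th bottom layer `B_i(A)`. -/
def bottomLayer [Fintype ι] [DecidableEq ι] (i : ι) (A : Finset (ι → ℤ)) : Finset (ι → ℤ) :=
  A.filter fun x => ∀ y ∈ A, (∀ j, j ≠ i → y j = x j) → x i ≤ y i

/-- The `i`-compression `C_i(A)`: each `x ∈ B_i(A)` is replaced by the point obtained
by setting its `i`-th coordinate to `0`. -/
def compress [Fintype ι] [DecidableEq ι] (i : ι) (A : Finset (ι → ℤ)) : Finset (ι → ℤ) :=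
  (A \ bottomLayer i A) ∪ (bottomLayer i A).image fun x => Function.update x i 0

/-- `layersRest A k = A \ (A_1 ∪ ⋯ ∪ A_k)` where `A_i` are the layers of `A`. -/
def layersRest {n : ℕ} (A : Finset (Fin n → ℤ)) : ℕ → Finset (Fin n → ℤ)
  | 0 => A
  | k + 1 =>
      layersRest A k \ (if h : k < n then bottomLayer ⟨k, h⟩ (layersRest A k) else ∅)

/-- The layers `A_1, …, A_n` of `A`, defined by `A_i = B_i(A \ (A_1 ∪ ⋯ ∪ A_{i-1}))`. -/
def layer {n : ℕ} (A : Finset (Fin n → ℤ)) (i : Fin n) : Finset (Fin n → ℤ) :=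
  bottomLayer i (layersRest A i.1)

/-- `compressUpTo A k = C_k(C_{k-1}(⋯(C_1(A))⋯))`. -/
def compressUpTo {n : ℕ} (A : Finset (Fin n → ℤ)) : ℕ → Finset (Fin n → ℤ)
  | 0 => A
  | k + 1 =>
      if h : k < n then compress ⟨k, h⟩ (compressUpTo A k) else compressUpTo A k

/-- The complete `i`-compression `𝒞_i(A)`: every line in direction `i` is replaced
by an initial segment of the same size. -/
def ccompress [Fintype ι] [DecidableEq ι] (i : ι) (A : Finset (ι → ℤ)) : Finset (ι → ℤ) :=
  A.biUnion fun x =>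
    (Finset.range ((A.filter fun y => ∀ j, j ≠ i → y j = x j).card)).image fun a : ℕ =>
      Function.update x i (a : ℤ)

/-- The set `T = {i : x i ≠ y i}` of coordinates where `x` and `y` differ. -/
def diffSet [Fintype ι] (x y : ι → ℤ) : Finset ι :=
  Finset.univ.filter fun i => x i ≠ y i

/-- The maximum value of `x` on a finite set of coordinates (`⊥` if the set is empty). -/
def maxOn (s : Finset ι) (x : ι → ℤ) : WithBot ℤ :=
  (s.image x).max

/-- The largest coordinate in `s` at which `x` attains its maximum over `s`. -/
def argmaxOn [LinearOrder ι] (s : Finset ι) (x : ι → ℤ) : WithBot ι :=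
  (s.filter fun i => (x i : WithBot ℤ) = maxOn s x).max

/-- The balanced order: with `T = {i : x i ≠ y i}`, `x < y` iff the maximum of `x` on `T` is
smaller than that of `y` on `T`, or they are equal and the largest index where `x` attains
this maximum on `T` is smaller than the corresponding index for `y`. -/
def balancedLT [Fintype ι] [LinearOrder ι] (x y : ι → ℤ) : Prop :=
  x ≠ y ∧
    (maxOn (diffSet x y) x < maxOn (diffSet x y) y ∨
      (maxOn (diffSet x y) x = maxOn (diffSet x y) y ∧
        argmaxOn (diffSet x y) x < argmaxOn (diffSet x y) y))

/-- `I` is an initial segment of the balanced order on `X_ι`. -/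
def IsInitSeg [Fintype ι] [LinearOrder ι] (I : Finset (ι → ℤ)) : Prop :=
  ↑I ⊆ XSet ι ∧ ∀ x ∈ I, ∀ y ∈ XSet ι, balancedLT y x → y ∈ I

/-- `S(A) = {x ∈ ℤ_{>0}^ι : replacing any one coordinate of x by 0 gives an element of A}`. -/
def SSet [DecidableEq ι] (A : Finset (ι → ℤ)) : Set (ι → ℤ) :=
  {x | (∀ k, 0 < x k) ∧ ∀ k, Function.update x k 0 ∈ A}

/-- Insert the value `a` at position `i`. -/
def insertAt [DecidableEq ι] (i : ι) (a : ℤ) (x : {j : ι // j ≠ i} → ℤ) : ι → ℤ :=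
  fun j => if h : j = i then a else x ⟨j, h⟩

/-- `L^i_a(A)`: the elements of `X_{n-1}` which, after inserting the value `a` at
position `i`, give elements of `A`. -/
def Lset [Fintype ι] [DecidableEq ι] (i : ι) (a : ℤ) (A : Finset (ι → ℤ)) :
    Finset ({j : ι // j ≠ i} → ℤ) :=
  (proj i (A.filter fun x => x i = a)).filter fun x' => ∃ j, x' j = 0

/-- `K^i(A)`: the elements of `ℤ_{>0}^{n-1}` which, after inserting a `0` at position `i`,
give elements of `A`. -/
def Kset [Fintype ι] [DecidableEq ι] (i : ι) (A : Finset (ι → ℤ)) :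
    Finset ({j : ι // j ≠ i} → ℤ) :=
  (proj i (A.filter fun x => x i = 0)).filter fun x' => ∀ j, 0 < x' j

/-- `K` is an initial segment of `ℤ_{>0}^{n-1}` with respect to the order `≺` defined by
`x ≺ y` iff inserting a `0` at position `i` into `x` gives a smaller element of `X_n`
(in the balanced order) than inserting a `0` at position `i` into `y`. -/
def IsKInitSeg [Fintype ι] [LinearOrder ι] (i : ι) (K : Finset ({j : ι // j ≠ i} → ℤ)) :
    Prop :=
  (∀ x ∈ K, ∀ j, 0 < x j) ∧
    ∀ x ∈ K, ∀ y : {j : ι // j ≠ i} → ℤ, (∀ j, 0 < y j) →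
      balancedLT (insertAt i 0 y) (insertAt i 0 x) → y ∈ K

/-- `A_N = {x ∈ ℤ^n : 0 ≤ x_j ≤ N-1 for all j, and x_i = 0 for some i}`. -/
def ANbox (n N : ℕ) : Finset (Fin n → ℤ) :=
  (Fintype.piFinset fun _ : Fin n => (Finset.range N).image fun k : ℕ => (k : ℤ)).filter
    fun x => ∃ i, x i = 0

/-- `g(n,m)`: the minimum of `gap A` over weak antichains `A` of size `m` in `ℤ^n`. -/
noncomputable def gMin (n m : ℕ) : ℝ :=
  sInf {r : ℝ | ∃ A : Finset (Fin n → ℤ), IsWeakAntichain A ∧ A.card = m ∧ (gap A : ℝ) = r}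

/-! ### Lowering the bottom points of lines -/

section Compression

variable [Fintype ι] [DecidableEq ι]

/-- The projection along coordinate `i`, realised inside the same space: coordinate `i` is
replaced by the constant `c`. -/
def flat (c : ℤ) (i : ι) (A : Finset (ι → ℤ)) : Finset (ι → ℤ) :=
  A.image fun x => Function.update x i c

open Classical in
/-- The points of `A` that are not lowest on their line in direction `i`. -/
noncomputable def nonBottom (i : ι) (A : Finset (ι → ℤ)) : Finset (ι → ℤ) :=
  A.filter fun x => ∃ v < x i, Function.update x i v ∈ A

/-- The compression which moves the lowest point of each line in direction `i` to height `c`. -/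
noncomputable def lower (c : ℤ) (i : ι) (A : Finset (ι → ℤ)) : Finset (ι → ℤ) :=
  flat c i A ∪ nonBottom i A

/-- `A` is closed under replacing coordinate `i` by `c`. -/
def ClosedAt (c : ℤ) (i : ι) (A : Finset (ι → ℤ)) : Prop :=
  ∀ x ∈ A, Function.update x i c ∈ A

theorem mem_flat {c : ℤ} {i : ι} {A : Finset (ι → ℤ)} {y : ι → ℤ} :
    y ∈ flat c i A ↔ ∃ x ∈ A, Function.update x i c = y := by
  simp [flat]

theorem mem_nonBottom {i : ι} {A : Finset (ι → ℤ)} {x : ι → ℤ} :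
    x ∈ nonBottom i A ↔ x ∈ A ∧ ∃ v < x i, Function.update x i v ∈ A := by
  classical
  simp [nonBottom]

theorem mem_lower {c : ℤ} {i : ι} {A : Finset (ι → ℤ)} {x : ι → ℤ} :
    x ∈ lower c i A ↔ x ∈ flat c i A ∨ x ∈ nonBottom i A := by
  simp [lower]

theorem card_proj (c : ℤ) (i : ι) (A : Finset (ι → ℤ)) :
    (proj i A).card = (flat c i A).card := by
  have h : flat c i A = (proj i A).image (insertAt i c) := by
    unfold flat proj
    rw [Finset.image_image]
    congr 1
    funext x j
    by_cases hj : j = i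
    · subst hj; simp [insertAt]
    · simp [insertAt, projFun, hj]
  rw [h, Finset.card_image_of_injective]
  intro x y hxy
  funext j
  have := congrFun hxy j.1
  simpa [insertAt, j.2] using this

/-- Every line in direction `i` that meets `A` has exactly one lowest point. -/
theorem card_flat_eq (c : ℤ) (i : ι) (A : Finset (ι → ℤ)) :
    (flat c i A).card = (A \ nonBottom i A).card := by
  have h : flat c i A = (A \ nonBottom i A).image fun x => Function.update x i c := by
    apply Finset.Subset.antisymm
    · intro y hy
      obtain ⟨x, hx, rfl⟩ := mem_flat.1 hy
      obtain ⟨z, hz, hmin⟩ := Finset.exists_min_image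
        (A.filter fun z => Function.update z i c = Function.update x i c) (fun z => z i)
        ⟨x, by simp [hx]⟩
      rw [Finset.mem_filter] at hz
      refine Finset.mem_image.2 ⟨z, ?_, hz.2⟩
      rw [Finset.mem_sdiff, mem_nonBottom]
      refine ⟨hz.1, ?_⟩
      rintro ⟨-, v, hv, hvA⟩
      have := hmin (Function.update z i v) (by simp [hvA, hz.2])
      simp at this
      omega
    · exact Finset.image_subset_image Finset.sdiff_subset
  rw [h, Finset.card_image_of_injOn]
  intro x hx y hy hxy
  simp only [Finset.coe_sdiff, Set.mem_sdiff, Finset.mem_coe, mem_nonBottom] at hx hy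
  have hj : ∀ j, j ≠ i → x j = y j := fun j hj => by
    simpa [hj] using congrFun hxy j
  have hx' : x = Function.update y i (x i) := by
    funext j
    by_cases h : j = i
    · subst h; simp
    · simp [h, hj j h]
  have hy' : y = Function.update x i (y i) := by
    funext j
    by_cases h : j = i
    · subst h; simp
    · simp [h, hj j h]
  rcases lt_trichotomy (x i) (y i) with h | h | h
  · exact absurd ⟨hy.1, x i, h, hx' ▸ hx.1⟩ hy.2
  · rw [hx', h]; simp
  · exact absurd ⟨hx.1, y i, h, hy' ▸ hy.1⟩ hx.2

theorem card_lower {c : ℤ} {i : ι} {A : Finset (ι → ℤ)} (hc : ∀ x ∈ A, c ≤ x i) :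
    (lower c i A).card = A.card := by
  have hd : Disjoint (flat c i A) (nonBottom i A) := by
    rw [Finset.disjoint_left]
    intro y hy hy'
    obtain ⟨x, -, rfl⟩ := mem_flat.1 hy
    obtain ⟨-, v, hv, hvA⟩ := mem_nonBottom.1 hy'
    have := hc _ hvA
    simp at this hv
    omega
  have hs : nonBottom i A ⊆ A := fun x hx => (mem_nonBottom.1 hx).1
  rw [lower, Finset.card_union_of_disjoint hd, card_flat_eq,
    Finset.card_sdiff_add_card_eq_card hs]

/-- Compression does not enlarge any projection, because
`flat c j (lower c i A) ⊆ lower c i (flat c j A)`. -/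
theorem card_flat_lower_le {c : ℤ} {i : ι} {A : Finset (ι → ℤ)} (hc : ∀ x ∈ A, ∀ k, c ≤ x k)
    (j : ι) : (flat c j (lower c i A)).card ≤ (flat c j A).card := by
  by_cases hij : i = j
  · subst hij
    apply Finset.card_le_card
    intro y hy
    obtain ⟨x, hx, rfl⟩ := mem_flat.1 hy
    rcases mem_lower.1 hx with hx | hx
    · obtain ⟨z, hz, rfl⟩ := mem_flat.1 hx
      exact mem_flat.2 ⟨z, hz, by simp⟩
    · exact mem_flat.2 ⟨x, (mem_nonBottom.1 hx).1, rfl⟩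
  · have hc' : ∀ x ∈ flat c j A, c ≤ x i := by
      intro y hy
      obtain ⟨x, hx, rfl⟩ := mem_flat.1 hy
      simpa [hij] using hc x hx i
    rw [← card_lower hc']
    apply Finset.card_le_card
    intro y hy
    obtain ⟨x, hx, rfl⟩ := mem_flat.1 hy
    rw [mem_lower]
    rcases mem_lower.1 hx with hx | hx
    · obtain ⟨z, hz, rfl⟩ := mem_flat.1 hx
      left
      exact mem_flat.2 ⟨_, mem_flat.2 ⟨z, hz, rfl⟩, Function.update_comm (Ne.symm hij) _ _ _⟩
    · obtain ⟨hxA, v, hv, hvA⟩ := mem_nonBottom.1 hx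
      right
      refine mem_nonBottom.2 ⟨mem_flat.2 ⟨x, hxA, rfl⟩, v, by simpa [hij] using hv, ?_⟩
      exact mem_flat.2 ⟨_, hvA, Function.update_comm hij _ _ _⟩

theorem closedAt_lower_self (c : ℤ) (i : ι) (A : Finset (ι → ℤ)) :
    ClosedAt c i (lower c i A) := by
  intro x hx
  rw [mem_lower]
  left
  rcases mem_lower.1 hx with hx | hx
  · obtain ⟨z, hz, rfl⟩ := mem_flat.1 hx
    exact mem_flat.2 ⟨z, hz, by simp⟩
  · exact mem_flat.2 ⟨x, (mem_nonBottom.1 hx).1, rfl⟩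

theorem closedAt_lower {c : ℤ} {i j : ι} (hij : i ≠ j) {A : Finset (ι → ℤ)}
    (h : ClosedAt c j A) : ClosedAt c j (lower c i A) := by
  intro x hx
  rw [mem_lower]
  rcases mem_lower.1 hx with hx | hx
  · obtain ⟨z, hz, rfl⟩ := mem_flat.1 hx
    left
    exact mem_flat.2 ⟨_, h z hz, Function.update_comm (Ne.symm hij) _ _ _⟩
  · obtain ⟨hxA, v, hv, hvA⟩ := mem_nonBottom.1 hx
    right
    refine mem_nonBottom.2 ⟨h x hxA, v, by simpa [hij] using hv, ?_⟩
    rw [Function.update_comm (Ne.symm hij)]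
    exact h _ hvA

/-- The state after compressing in the directions of `S`. A point that never acquired the
coordinate `c` is an original point and has an original point below it, strictly in the
directions of `S`. -/
theorem exists_compressed_aux {c : ℤ} (A : Finset (ι → ℤ)) (hc : ∀ x ∈ A, ∀ i, c < x i)
    (S : Finset ι) :
    ∃ B : Finset (ι → ℤ), B.card = A.card ∧ (∀ j, (flat c j B).card ≤ (flat c j A).card) ∧
      (∀ x ∈ B, ∀ i, c ≤ x i) ∧ (∀ x ∈ B, ∀ i ∉ S, c < x i) ∧ (∀ i ∈ S, ClosedAt c i B) ∧
      ∀ x ∈ B, (∀ i, c < x i) →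
        x ∈ A ∧ ∃ y ∈ A, (∀ i ∈ S, y i < x i) ∧ ∀ i ∉ S, y i = x i := by
  induction S using Finset.induction_on with
  | empty =>
    exact ⟨A, rfl, fun _ => le_rfl, fun x hx i => (hc x hx i).le, fun x hx i _ => hc x hx i,
      by simp, fun x hx _ => ⟨hx, x, hx, by simp, fun _ _ => rfl⟩⟩
  | insert k S hk ih =>
    obtain ⟨B, h1, h2, h3, h4, h5, h6⟩ := ih
    refine ⟨lower c k B, (card_lower fun x hx => h3 x hx k).trans h1,
      fun j => (card_flat_lower_le h3 j).trans (h2 j), ?_, ?_, ?_, ?_⟩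
    · intro x hx i
      rcases mem_lower.1 hx with hx | hx
      · obtain ⟨z, hz, rfl⟩ := mem_flat.1 hx
        by_cases hi : i = k
        · subst hi; simp
        · simpa [hi] using h3 z hz i
      · exact h3 x (mem_nonBottom.1 hx).1 i
    · intro x hx i hi
      rw [Finset.mem_insert, not_or] at hi
      rcases mem_lower.1 hx with hx | hx
      · obtain ⟨z, hz, rfl⟩ := mem_flat.1 hx
        simpa [hi.1] using h4 z hz i hi.2
      · exact h4 x (mem_nonBottom.1 hx).1 i hi.2
    · intro i hi
      by_cases hik : i = k
      · subst hik; exact closedAt_lower_self _ _ _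
      · exact closedAt_lower (Ne.symm hik) (h5 i (Finset.mem_of_mem_insert_of_ne hi hik))
    · intro x hx hpos
      rcases mem_lower.1 hx with hx | hx
      · obtain ⟨z, hz, rfl⟩ := mem_flat.1 hx
        have := hpos k
        simp at this
      · obtain ⟨hxB, v, hv, hvB⟩ := mem_nonBottom.1 hx
        refine ⟨(h6 x hxB hpos).1, ?_⟩
        -- `k ∉ S`, so the lower point on the line still has height above `c`
        have hcv : c < v := by simpa using h4 _ hvB k hk
        obtain ⟨-, y, hy, hlt, heq⟩ := h6 _ hvB (by
          intro i
          by_cases hi : i = k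
          · subst hi; simpa using hcv
          · simpa [hi] using hpos i)
        refine ⟨y, hy, ?_, ?_⟩
        · intro i hi
          by_cases hik : i = k
          · subst hik
            have := heq i hk
            simp at this
            omega
          · simpa [hik] using hlt i (Finset.mem_of_mem_insert_of_ne hi hik)
        · intro i hi
          rw [Finset.mem_insert, not_or] at hi
          simpa [hi.1] using heq i hi.2

theorem exists_compressed {c : ℤ} {A : Finset (ι → ℤ)} (hc : ∀ x ∈ A, ∀ i, c < x i)
    (hA : IsWeakAntichain A) :
    ∃ B : Finset (ι → ℤ), B.card = A.card ∧ (∀ j, (flat c j B).card ≤ (flat c j A).card) ∧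
      (∀ i, ClosedAt c i B) ∧ ∀ x ∈ B, ∃ i, x i = c := by
  obtain ⟨B, h1, h2, h3, -, h5, h6⟩ := exists_compressed_aux A hc Finset.univ
  refine ⟨B, h1, h2, fun i => h5 i (Finset.mem_univ i), fun x hx => ?_⟩
  by_contra! hne
  obtain ⟨hxA, y, hy, hlt, -⟩ := h6 x hx fun i => lt_of_le_of_ne (h3 x hx i) (hne i).symm
  exact hA y hy x hxA fun i => hlt i (Finset.mem_univ i)

end Compression

/-! ### Counting points by the size of their support -/

section Levels

variable [Fintype ι] [DecidableEq ι]

/-- The set of coordinates of `x` that differ from `c`. -/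
def csupp (c : ℤ) (x : ι → ℤ) : Finset ι := Finset.univ.filter fun i => x i ≠ c

/-- The number of points of `A` with exactly `k` coordinates different from `c`. -/
def level (c : ℤ) (k : ℕ) (A : Finset (ι → ℤ)) : ℕ :=
  (A.filter fun x => (csupp c x).card = k).card

/-- The points `x` of `A` with `x i = v`, with the coordinate `i` then replaced by `c`. -/
def fiber (c : ℤ) (i : ι) (v : ℤ) (A : Finset (ι → ℤ)) : Finset (ι → ℤ) :=
  flat c i (A.filter fun x => x i = v)

theorem level_mono (c : ℤ) (k : ℕ) {A B : Finset (ι → ℤ)} (h : A ⊆ B) :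
    level c k A ≤ level c k B :=
  Finset.card_le_card (Finset.filter_subset_filter _ h)

theorem csupp_update (c : ℤ) (i : ι) (x : ι → ℤ) :
    csupp c (Function.update x i c) = (csupp c x).erase i := by
  ext j
  by_cases h : j = i
  · subst h; simp [csupp]
  · simp [csupp, h]

theorem mem_fiber {c v : ℤ} {i : ι} {A : Finset (ι → ℤ)} {y : ι → ℤ} :
    y ∈ fiber c i v A ↔ ∃ x ∈ A, x i = v ∧ Function.update x i c = y := by
  simp [fiber, mem_flat, and_assoc]

theorem fiber_closedAt {c v : ℤ} {i : ι} {A : Finset (ι → ℤ)} (h : ∀ j, ClosedAt c j A) (j : ι) :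
    ClosedAt c j (fiber c i v A) := by
  intro y hy
  obtain ⟨x, hx, hv, rfl⟩ := mem_fiber.1 hy
  by_cases hj : j = i
  · subst hj
    exact mem_fiber.2 ⟨x, hx, hv, by simp⟩
  · exact mem_fiber.2 ⟨_, h j x hx, by simpa [Ne.symm hj] using hv, Function.update_comm hj _ _ _⟩

theorem fiber_subset {c v : ℤ} {i : ι} {A : Finset (ι → ℤ)} (h : ∀ j, ClosedAt c j A) :
    fiber c i v A ⊆ fiber c i c A := by
  intro y hy
  obtain ⟨x, hx, hv, rfl⟩ := mem_fiber.1 hy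
  exact mem_fiber.2 ⟨_, h i x hx, by simp, by simp⟩

theorem csupp_fiber {c v : ℤ} {i : ι} {S : Finset ι} {A : Finset (ι → ℤ)}
    (h : ∀ x ∈ A, csupp c x ⊆ insert i S) : ∀ x ∈ fiber c i v A, csupp c x ⊆ S := by
  intro y hy
  obtain ⟨x, hx, hv, rfl⟩ := mem_fiber.1 hy
  rw [csupp_update]
  intro j hj
  rw [Finset.mem_erase] at hj
  exact Finset.mem_of_mem_insert_of_ne (h x hx hj.2) hj.1

theorem const_mem {c : ℤ} {A : Finset (ι → ℤ)} (h : ∀ j, ClosedAt c j A) (hne : A.Nonempty) :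
    (fun _ => c) ∈ A := by
  obtain ⟨x, hx⟩ := hne
  have key : ∀ S : Finset ι, (fun j => if j ∈ S then c else x j) ∈ A := by
    intro S
    induction S using Finset.induction_on with
    | empty => simpa using hx
    | insert k S hk ih =>
      have := h k _ ih
      convert this using 1
      funext j
      by_cases hj : j = k
      · subst hj; simp
      · simp [hj]
  simpa using key Finset.univ

theorem one_le_level_zero {c : ℤ} {A : Finset (ι → ℤ)} (h : ∀ j, ClosedAt c j A)
    (hne : A.Nonempty) : 1 ≤ level c 0 A :=
  Finset.card_pos.2 ⟨_, Finset.mem_filter.2 ⟨const_mem h hne, by simp [csupp]⟩⟩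

theorem card_filter_fiber_eq {c v : ℤ} {i : ι} {k l : ℕ} {A : Finset (ι → ℤ)}
    (h : ∀ x : ι → ℤ, x i = v → ((csupp c x).card = k ↔ ((csupp c x).erase i).card = l)) :
    (A.filter fun x => (csupp c x).card = k ∧ x i = v).card = level c l (fiber c i v A) := by
  have : (fiber c i v A).filter (fun x => (csupp c x).card = l) =
      (A.filter fun x => (csupp c x).card = k ∧ x i = v).image
        fun x => Function.update x i c := by
    ext y
    simp only [Finset.mem_filter, mem_fiber, Finset.mem_image]
    constructor
    · rintro ⟨⟨x, hx, hv, rfl⟩, hl⟩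
      rw [csupp_update] at hl
      exact ⟨x, ⟨hx, (h x hv).2 hl, hv⟩, rfl⟩
    · rintro ⟨x, ⟨hx, hk, hv⟩, rfl⟩
      refine ⟨⟨x, hx, hv, rfl⟩, ?_⟩
      rw [csupp_update]
      exact (h x hv).1 hk
  rw [level, this, Finset.card_image_of_injOn]
  intro x hx y hy hxy
  simp only [Finset.coe_filter, Set.mem_ofPred_eq] at hx hy
  funext j
  by_cases hj : j = i
  · subst hj; rw [hx.2.2, hy.2.2]
  · simpa [hj] using congrFun hxy j

/-- Splitting the points with support of size `k + 1` by the value of coordinate `i`. -/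
theorem level_succ_eq (c : ℤ) (k : ℕ) (i : ι) (A : Finset (ι → ℤ)) :
    level c (k + 1) A = level c (k + 1) (fiber c i c A) +
      ∑ v ∈ (A.image fun x => x i).erase c, level c k (fiber c i v A) := by
  set V := A.image fun x => x i with hV
  have h0 : (A.filter fun x => (csupp c x).card = k + 1 ∧ x i = c).card =
      level c (k + 1) (fiber c i c A) := by
    apply card_filter_fiber_eq
    intro x hx
    rw [Finset.erase_eq_of_notMem (by simp [csupp, hx])]
  have h1 : ∀ v ∈ V.erase c, (A.filter fun x => (csupp c x).card = k + 1 ∧ x i = v).card =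
      level c k (fiber c i v A) := by
    intro v hv
    apply card_filter_fiber_eq
    intro x hx
    have hmem : i ∈ csupp c x := by
      simp [csupp, hx, (Finset.mem_erase.1 hv).1]
    rw [← Finset.card_erase_add_one hmem]
    omega
  rw [← Finset.sum_congr rfl h1, ← h0]
  have h2 : level c (k + 1) A =
      ∑ v ∈ insert c V, (A.filter fun x => (csupp c x).card = k + 1 ∧ x i = v).card := by
    rw [level, Finset.card_eq_sum_card_fiberwise (f := fun x => x i) (t := insert c V)]
    · simp only [Finset.filter_filter]
    · intro x hx
      simp only [Finset.coe_filter, Set.mem_ofPred_eq] at hx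
      exact Finset.mem_insert_of_mem (Finset.mem_image_of_mem _ hx.1)
  rw [h2, ← Finset.insert_erase (Finset.mem_insert_self c V),
    Finset.sum_insert (Finset.notMem_erase _ _), Finset.erase_insert_eq_erase]

/-- Weighted AM-GM for two numbers. -/
theorem amgm_two (k : ℕ) {a b : ℝ} (ha : 0 ≤ a) (hb : 0 ≤ b) :
    ((k : ℝ) + 1) * a * b ^ k ≤ k * b ^ (k + 1) + a ^ (k + 1) := by
  induction k with
  | zero => simp
  | succ k ih =>
    have h1 := mul_le_mul_of_nonneg_left ih ha
    have h2 : 0 ≤ ((k : ℝ) + 1) * b ^ k * (b - a) ^ 2 := by positivity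
    push_cast
    ring_nf at h1 h2 ⊢
    linarith

theorem exists_root {k : ℕ} (hk : 1 ≤ k) {u : ℝ} (hu : 0 ≤ u) : ∃ a : ℝ, 0 ≤ a ∧ a ^ k = u :=
  ⟨u ^ ((k : ℝ)⁻¹), by positivity, Real.rpow_inv_natCast_pow hu (by omega)⟩

/-- The numerical part of the induction step: `a` is the normalised size of level `k` of the
section at `c`, and `x`, `y` count the contributions of the other sections to the levels `k` and
`k + 1`. -/
theorem step_ineq {m k : ℕ} (hk : 1 ≤ k) (hkm : k ≤ m) {a b x y : ℝ} (ha : 0 ≤ a) (hb : 0 ≤ b)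
    (hxy : (m.choose (k - 1) : ℝ) * y ≤ m.choose k * a * x)
    (h : (m.choose k : ℝ) * a ^ k + x ≤ (m + 1).choose k * b ^ k) :
    (m.choose (k + 1) : ℝ) * a ^ (k + 1) + y ≤ (m + 1).choose (k + 1) * b ^ (k + 1) := by
  obtain ⟨l, rfl⟩ : ∃ l, k = l + 1 := ⟨k - 1, by omega⟩
  simp only [Nat.add_sub_cancel] at hxy
  have hA := amgm_two (l + 1) ha hb
  push_cast at hA
  have hc : (0 : ℝ) < m.choose l := by exact_mod_cast Nat.choose_pos (by omega)
  have e1 : (m.choose (l + 1) : ℝ) * (l + 1) = m.choose l * (m - l) := by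
    have := Nat.choose_succ_right_eq m l
    have h' : ((m - l : ℕ) : ℝ) = (m : ℝ) - l := by
      rw [Nat.cast_sub (by omega)]
    rw [← h']; exact_mod_cast this
  have e2 : (m.choose (l + 2) : ℝ) * (l + 2) = m.choose (l + 1) * (m - l - 1) := by
    have := Nat.choose_succ_right_eq m (l + 1)
    have h' : ((m - (l + 1) : ℕ) : ℝ) = (m : ℝ) - l - 1 := by
      rw [Nat.cast_sub (by omega)]; push_cast; ring
    rw [← h']; exact_mod_cast this
  have p1 : ((m + 1).choose (l + 1) : ℝ) = m.choose l + m.choose (l + 1) := by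
    exact_mod_cast Nat.choose_succ_succ m l
  have p2 : ((m + 1).choose (l + 1 + 1) : ℝ) = m.choose (l + 1) + m.choose (l + 2) := by
    exact_mod_cast Nat.choose_succ_succ m (l + 1)
  rw [p1] at h
  rw [p2]
  have hl : (0 : ℝ) < (l : ℝ) + 1 := by positivity
  have hl2 : (0 : ℝ) < (l : ℝ) + 2 := by positivity
  have hml : (0 : ℝ) ≤ (m : ℝ) - l := by
    have : (l : ℝ) ≤ m := by exact_mod_cast (by omega : l ≤ m)
    linarith
  have f1 : (m.choose (l + 1) : ℝ) = m.choose l * (m - l) / (l + 1) := by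
    rw [← e1]; field_simp
  have f2 : (m.choose (l + 2) : ℝ) = m.choose l * (m - l) / (l + 1) * (m - l - 1) / (l + 2) := by
    rw [← f1, ← e2]; field_simp
  have e3 : (m.choose (l + 1 + 1) : ℝ) = m.choose (l + 2) := rfl
  rw [e3]
  rw [f2, f1]
  rw [f1] at h hxy
  generalize (m.choose l : ℝ) = C at *
  set r : ℝ := (m : ℝ) - l with hr
  have hy : y ≤ r / (l + 1) * a * x := by
    have : C * y ≤ C * (r / (l + 1) * a * x) := by
      calc C * y ≤ _ := hxy
        _ = _ := by ring
    exact le_of_mul_le_mul_left this hc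
  have hra : 0 ≤ r / (l + 1) * a := by positivity
  have hx : r / (l + 1) * a * x ≤
      r / (l + 1) * a * ((C + C * r / (l + 1)) * b ^ (l + 1) - C * r / (l + 1) * a ^ (l + 1)) :=
    mul_le_mul_of_nonneg_left (by linarith) hra
  have hK : 0 ≤ C * r * (r + l + 1) / ((l + 1) ^ 2 * (l + 2)) := by positivity
  have hfin := mul_le_mul_of_nonneg_left hA hK
  have id1 : C * r * (r + l + 1) / ((l + 1) ^ 2 * (l + 2)) *
      (((l : ℝ) + 1) * b ^ (l + 1 + 1) + a ^ (l + 1 + 1)) -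
      C * r * (r + l + 1) / ((l + 1) ^ 2 * (l + 2)) * (((l : ℝ) + 1 + 1) * a * b ^ (l + 1)) =
      (C * r / (l + 1) + C * r / (l + 1) * (r - 1) / (l + 2)) * b ^ (l + 1 + 1)
      - (C * r / (l + 1) * (r - 1) / (l + 2) * a ^ (l + 1 + 1) + r / (l + 1) * a *
        ((C + C * r / (l + 1)) * b ^ (l + 1) - C * r / (l + 1) * a ^ (l + 1))) := by
    field_simp
    ring
  linarith

/-- A Kruskal–Katona inequality for coloured complexes: the normalised level sizes
`(level k / C(|S|, k)) ^ (1 / k)` are nonincreasing in `k` for `1 ≤ k ≤ |S|`. -/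
theorem level_step (c : ℤ) (S : Finset ι) :
    ∀ (A : Finset (ι → ℤ)), (∀ j, ClosedAt c j A) → (∀ x ∈ A, csupp c x ⊆ S) →
      ∀ (k : ℕ) (b : ℝ), 1 ≤ k → 0 ≤ b → (level c k A : ℝ) ≤ S.card.choose k * b ^ k →
        (level c (k + 1) A : ℝ) ≤ S.card.choose (k + 1) * b ^ (k + 1) := by
  induction S using Finset.induction_on with
  | empty =>
    intro A _ hS k b _ _ _
    have : level c (k + 1) A = 0 := by
      rw [level, Finset.card_eq_zero, Finset.filter_eq_empty_iff]
      intro x hx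
      rw [Finset.subset_empty.1 (hS x hx)]
      simp
    simp [this]
  | insert i S hi ih =>
    intro A hA hS k b hk hb h
    rw [Finset.card_insert_of_notMem hi] at h ⊢
    set m := S.card with hm
    by_cases hkm : k ≤ m
    swap
    · have : level c (k + 1) A = 0 := by
        rw [level, Finset.card_eq_zero, Finset.filter_eq_empty_iff]
        intro x hx
        have := Finset.card_le_card (hS x hx)
        rw [Finset.card_insert_of_notMem hi] at this
        omega
      rw [this]
      simp only [Nat.cast_zero]
      positivity
    set V := (A.image fun x => x i).erase c with hV
    have hck : (0 : ℝ) < m.choose k := by exact_mod_cast Nat.choose_pos hkm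
    have hck' : (0 : ℝ) < m.choose (k - 1) := by exact_mod_cast Nat.choose_pos (by omega)
    obtain ⟨a, ha, hak⟩ := exists_root hk
      (show (0 : ℝ) ≤ level c k (fiber c i c A) / m.choose k by positivity)
    have hlev : (level c k (fiber c i c A) : ℝ) = m.choose k * a ^ k := by
      rw [hak]; field_simp
    have h0 := ih _ (fiber_closedAt (i := i) (v := c) hA) (csupp_fiber hS) k a hk ha hlev.le
    have hv : ∀ v ∈ V, (m.choose (k - 1) : ℝ) * level c k (fiber c i v A) ≤
        m.choose k * a * level c (k - 1) (fiber c i v A) := by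
      intro v hv
      have hsub : (level c k (fiber c i v A) : ℝ) ≤ m.choose k * a ^ k := by
        rw [← hlev]; exact_mod_cast level_mono c k (fiber_subset hA)
      obtain rfl | hk2 : k = 1 ∨ 2 ≤ k := by omega
      · have hne : (fiber c i v A).Nonempty := by
          obtain ⟨x, hx, hxv⟩ := Finset.mem_image.1 (Finset.mem_erase.1 hv).2
          exact ⟨_, mem_fiber.2 ⟨x, hx, hxv, rfl⟩⟩
        have h1 : (1 : ℝ) ≤ level c 0 (fiber c i v A) := by
          exact_mod_cast one_le_level_zero (fiber_closedAt hA) hne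
        simp only [Nat.sub_self, Nat.choose_zero_right, Nat.cast_one, one_mul, pow_one] at hsub ⊢
        exact hsub.trans (le_mul_of_one_le_right (by positivity) h1)
      · obtain ⟨l, rfl⟩ : ∃ l, k = l + 1 := ⟨k - 1, by omega⟩
        simp only [Nat.add_sub_cancel] at hck' ⊢
        obtain ⟨t, ht, htl⟩ := exists_root (show 1 ≤ l by omega)
          (show (0 : ℝ) ≤ level c l (fiber c i v A) / m.choose l by positivity)
        have hlt : (level c l (fiber c i v A) : ℝ) = m.choose l * t ^ l := by
          rw [htl]; field_simp
        have h2 := ih _ (fiber_closedAt (i := i) (v := v) hA) (csupp_fiber hS) l t (by omega) ht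
          hlt.le
        -- the level is bounded both by `t ^ (l + 1)` and by `a ^ (l + 1)`
        have h3 : (level c (l + 1) (fiber c i v A) : ℝ) ≤ m.choose (l + 1) * (a * t ^ l) := by
          rcases le_total t a with hta | hta
          · refine h2.trans (mul_le_mul_of_nonneg_left ?_ hck.le)
            rw [pow_succ']
            gcongr
          · refine hsub.trans (mul_le_mul_of_nonneg_left ?_ hck.le)
            rw [pow_succ']
            gcongr
        rw [hlt]
        calc (m.choose l : ℝ) * level c (l + 1) (fiber c i v A)
            ≤ m.choose l * (m.choose (l + 1) * (a * t ^ l)) := by gcongr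
          _ = _ := by ring
    have hsum := Finset.sum_le_sum hv
    rw [← Finset.mul_sum, ← Finset.mul_sum] at hsum
    have s1 := level_succ_eq c k i A
    have s2 := level_succ_eq c (k - 1) i A
    rw [Nat.sub_add_cancel hk] at s2
    rw [s2] at h
    rw [s1]
    push_cast at h ⊢
    rw [hlev] at h
    have := step_ineq hk hkm ha hb hsum h
    linarith

end Levels

/-! ### Comparison with the box -/

/-- A sequence of total `0` which is first nonnegative and then nonpositive has nonnegative sum
against a decreasing weight. -/
theorem crossing (n : ℕ) (d : ℕ → ℤ) (h0 : 0 ≤ d 0)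
    (hd : ∀ k, 1 ≤ k → d k ≤ 0 → d (k + 1) ≤ 0) (hs : ∑ k ∈ Finset.range n, d k = 0) :
    0 ≤ ∑ k ∈ Finset.range n, ((n : ℤ) - k) * d k := by
  by_cases hex : ∃ K, 1 ≤ K ∧ d K ≤ 0
  · classical
    set K := Nat.find hex with hK
    obtain ⟨hK1, hK2⟩ := Nat.find_spec hex
    have hpos : ∀ k, k < K → 0 ≤ d k := by
      intro k hk
      rcases Nat.eq_zero_or_pos k with rfl | hk0
      · exact h0
      · have := Nat.find_min hex hk
        push Not at this
        exact (this hk0).le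
    have hneg : ∀ k, K ≤ k → d k ≤ 0 := by
      intro k hk
      induction k, hk using Nat.le_induction with
      | base => exact hK2
      | succ k hk ih => exact hd k (hK1.trans hk) ih
    have hterm : 0 ≤ ∑ k ∈ Finset.range n, ((K : ℤ) - k) * d k := by
      apply Finset.sum_nonneg
      intro k _
      rcases lt_or_ge k K with hk | hk
      · exact mul_nonneg (by omega) (hpos k hk)
      · exact mul_nonneg_of_nonpos_of_nonpos (by omega) (hneg k hk)
    have : ∑ k ∈ Finset.range n, ((n : ℤ) - k) * d k =
        ∑ k ∈ Finset.range n, ((K : ℤ) - k) * d k + ((n : ℤ) - K) * ∑ k ∈ Finset.range n, d k := by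
      rw [Finset.mul_sum, ← Finset.sum_add_distrib]
      exact Finset.sum_congr rfl fun k _ => by ring
    rw [this, hs]
    simpa using hterm
  · push Not at hex
    apply Finset.sum_nonneg
    intro k hk
    rw [Finset.mem_range] at hk
    refine mul_nonneg (by omega) ?_
    rcases Nat.eq_zero_or_pos k with rfl | hk0
    · exact h0
    · exact (hex k hk0).le

theorem sum_choose_lt (n M : ℕ) :
    ∑ k ∈ Finset.range n, (n.choose k : ℤ) * M ^ k = ((M : ℤ) + 1) ^ n - M ^ n := by
  have := add_pow (M : ℤ) 1 n
  rw [Finset.sum_range_succ] at this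
  simp only [one_pow, mul_one, Nat.choose_self, Nat.cast_one] at this
  rw [this]
  simp [mul_comm]

theorem sum_weight_choose (n M : ℕ) (hn : 1 ≤ n) :
    ∑ k ∈ Finset.range n, ((n : ℤ) - k) * ((n.choose k : ℤ) * M ^ k) =
      n * ((M : ℤ) + 1) ^ (n - 1) := by
  obtain ⟨m, rfl⟩ : ∃ m, n = m + 1 := ⟨n - 1, by omega⟩
  rw [Nat.add_sub_cancel, add_pow, Finset.mul_sum]
  refine Finset.sum_congr rfl fun k hk => ?_
  rw [Finset.mem_range] at hk
  have h := Nat.choose_mul_succ_eq m k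
  have h' : ((m + 1 - k : ℕ) : ℤ) = ((m + 1 : ℕ) : ℤ) - k := by
    rw [Nat.cast_sub (by omega)]
  have h2 : (m.choose k : ℤ) * ((m + 1 : ℕ) : ℤ) =
      ((m + 1).choose k : ℤ) * (((m + 1 : ℕ) : ℤ) - k) := by
    rw [← h']; exact_mod_cast h
  rw [one_pow, mul_one]
  linear_combination (-(M : ℤ) ^ k) * h2

/-- The lower bound for the projections of compressed sets. -/
theorem closed_bound {n M : ℕ} (hn : 1 ≤ n) {c : ℤ} {B : Finset (Fin n → ℤ)}
    (hB : ∀ i, ClosedAt c i B) (hX : ∀ x ∈ B, ∃ i, x i = c)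
    (hcard : (B.card : ℤ) = ((M : ℤ) + 1) ^ n - M ^ n) :
    (n : ℤ) * ((M : ℤ) + 1) ^ (n - 1) ≤ ∑ i, ((flat c i B).card : ℤ) := by
  have hne : B.Nonempty := by
    rw [← Finset.card_pos]
    have : (M : ℤ) ^ n < ((M : ℤ) + 1) ^ n :=
      pow_lt_pow_left₀ (by omega) (by positivity) (by omega)
    omega
  have hlt : ∀ x ∈ B, (csupp c x).card < n := by
    intro x hx
    obtain ⟨i, hi⟩ := hX x hx
    have : csupp c x ⊂ Finset.univ :=
      Finset.ssubset_univ_iff.2 fun h => by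
        have := h ▸ Finset.mem_univ i
        simp [csupp, hi] at this
    simpa using Finset.card_lt_card this
  have hmaps : Set.MapsTo (fun x => (csupp c x).card) (B : Set (Fin n → ℤ))
      (Finset.range n : Set ℕ) := fun x hx => by simpa using hlt x hx
  have hsum : (B.card : ℤ) = ∑ k ∈ Finset.range n, (level c k B : ℤ) := by
    exact_mod_cast Finset.card_eq_sum_card_fiberwise hmaps
  have hflat : ∀ i, flat c i B = B.filter fun x => x i = c := by
    intro i
    ext y
    rw [mem_flat, Finset.mem_filter]
    constructor
    · rintro ⟨x, hx, rfl⟩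
      exact ⟨hB i x hx, by simp⟩
    · rintro ⟨hy, hi⟩
      exact ⟨y, hy, by rw [← hi]; simp⟩
  have hproj : ∑ i, ((flat c i B).card : ℤ) =
      ∑ k ∈ Finset.range n, ((n : ℤ) - k) * (level c k B : ℤ) := by
    have h1 : ∑ i, ((flat c i B).card : ℤ) = ∑ x ∈ B, ((n : ℤ) - (csupp c x).card) := by
      simp_rw [hflat, Finset.card_filter]
      push_cast
      rw [Finset.sum_comm]
      refine Finset.sum_congr rfl fun x _ => ?_
      have h := Finset.card_filter_add_card_filter_not (s := (Finset.univ : Finset (Fin n)))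
        (fun i => x i = c)
      rw [Finset.card_univ, Fintype.card_fin] at h
      have h' : ∑ i, (if x i = c then (1 : ℤ) else 0) =
          ((Finset.univ.filter fun i => x i = c).card : ℤ) := by
        simp
      rw [h', csupp]
      simp only [ne_eq]
      omega
    rw [h1, ← Finset.sum_fiberwise_of_maps_to hmaps]
    refine Finset.sum_congr rfl fun k _ => ?_
    rw [Finset.sum_congr rfl (g := fun _ => (n : ℤ) - k)
      (fun x hx => by rw [(Finset.mem_filter.1 hx).2])]
    rw [Finset.sum_const, nsmul_eq_mul, mul_comm]
    rfl
  have hcross := crossing n (fun k => (level c k B : ℤ) - (n.choose k : ℤ) * M ^ k)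
    (by
      have := one_le_level_zero hB hne
      simp
      omega)
    (by
      intro k hk hd
      have hle : (level c k B : ℝ) ≤ n.choose k * (M : ℝ) ^ k := by
        exact_mod_cast (sub_nonpos.1 hd)
      have := level_step c Finset.univ B hB (fun _ _ => Finset.subset_univ _) k M hk
        (by positivity) (by simpa using hle)
      rw [Finset.card_univ, Fintype.card_fin] at this
      exact sub_nonpos.2 (by exact_mod_cast this))
    (by rw [Finset.sum_sub_distrib, ← hsum, hcard, sum_choose_lt]; ring)
  simp only [mul_sub] at hcross
  rw [Finset.sum_sub_distrib, sum_weight_choose n M hn] at hcross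
  rw [hproj]
  linarith

theorem mem_ANbox {n N : ℕ} {x : Fin n → ℤ} :
    x ∈ ANbox n N ↔ (∀ i, 0 ≤ x i ∧ x i < N) ∧ ∃ i, x i = 0 := by
  rw [ANbox, Finset.mem_filter, Fintype.mem_piFinset]
  refine and_congr_left fun _ => forall_congr' fun i => ?_
  simp only [Finset.mem_image, Finset.mem_range]
  constructor
  · rintro ⟨a, ha, h⟩; omega
  · rintro ⟨h0, h1⟩; exact ⟨(x i).toNat, by omega, by omega⟩

theorem card_ANbox {n N : ℕ} (hN : 1 ≤ N) : (ANbox n N).card = N ^ n - (N - 1) ^ n := by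
  have h : ANbox n N = (Fintype.piFinset fun _ : Fin n => Finset.Ico (0 : ℤ) N) \
      Fintype.piFinset fun _ : Fin n => Finset.Ico (1 : ℤ) N := by
    ext x
    rw [mem_ANbox, Finset.mem_sdiff, Fintype.mem_piFinset, Fintype.mem_piFinset]
    simp only [Finset.mem_Ico]
    refine and_congr_right fun hx => ?_
    push Not
    refine exists_congr fun i => ?_
    have := hx i
    omega
  rw [h, Finset.card_sdiff_of_subset]
  · rw [Fintype.card_piFinset_const, Fintype.card_piFinset_const]
    simp only [Int.card_Ico]
    congr 2
    omega
  · exact Fintype.piFinset_subset _ _ fun _ => Finset.Ico_subset_Ico_left (by omega)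

theorem card_proj_ANbox_le {n N : ℕ} (i : Fin n) : (proj i (ANbox n N)).card ≤ N ^ (n - 1) := by
  have h : proj i (ANbox n N) ⊆
      Fintype.piFinset fun _ : {j : Fin n // j ≠ i} => Finset.Ico (0 : ℤ) N := by
    intro y hy
    obtain ⟨x, hx, rfl⟩ := Finset.mem_image.1 hy
    rw [Fintype.mem_piFinset]
    intro j
    rw [Finset.mem_Ico]
    exact (mem_ANbox.1 hx).1 j.1
  refine (Finset.card_le_card h).trans ?_
  rw [Fintype.card_piFinset]
  simp [Fintype.card_subtype_compl]

/-- For `n ≥ 2`, `N ≥ 1`, the set `A_N` has size `N^n - (N-1)^n`, and it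
minimises the gap among all weak antichains in `ℤ^n` of this size. -/
theorem ANbox_minimises_gap (n N : ℕ) (hn : 2 ≤ n) (hN : 1 ≤ N) :
    (ANbox n N).card = N ^ n - (N - 1) ^ n ∧
      ∀ A : Finset (Fin n → ℤ), IsWeakAntichain A → A.card = N ^ n - (N - 1) ^ n →
        gap (ANbox n N) ≤ gap A := by
  refine ⟨card_ANbox hN, fun A hA hcard => ?_⟩
  obtain ⟨M, rfl⟩ : ∃ M, N = M + 1 := ⟨N - 1, by omega⟩
  rw [Nat.add_sub_cancel] at hcard
  obtain ⟨c, hc⟩ : ∃ c : ℤ, ∀ x ∈ A, ∀ i, c < x i := by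
    obtain ⟨b, hb⟩ := ((A ×ˢ (Finset.univ : Finset (Fin n))).image fun p => p.1 p.2).bddBelow
    refine ⟨b - 1, fun x hx i => ?_⟩
    have : b ≤ x i := hb (Finset.mem_coe.2 (Finset.mem_image.2 ⟨(x, i), by simp [hx], rfl⟩))
    omega
  obtain ⟨B, h1, h2, h3, h4⟩ := exists_compressed hc hA
  have hBcard : (B.card : ℤ) = ((M : ℤ) + 1) ^ n - M ^ n := by
    rw [h1, hcard, Nat.cast_sub (Nat.pow_le_pow_left (by omega) n)]
    push_cast
    ring
  have hlow := closed_bound (by omega) h3 h4 hBcard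
  have hle : ∑ i, ((flat c i B).card : ℤ) ≤ ∑ i, ((proj i A).card : ℤ) :=
    Finset.sum_le_sum fun i _ => by rw [card_proj c]; exact_mod_cast h2 i
  have hbox : ∑ i, ((proj i (ANbox n (M + 1))).card : ℤ) ≤ n * ((M : ℤ) + 1) ^ (n - 1) := by
    calc ∑ i, ((proj i (ANbox n (M + 1))).card : ℤ)
        ≤ ∑ _i : Fin n, ((M : ℤ) + 1) ^ (n - 1) :=
          Finset.sum_le_sum fun i _ => by exact_mod_cast card_proj_ANbox_le i
      _ = _ := by simp
  have hsame : ((ANbox n (M + 1)).card : ℤ) = A.card := by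
    rw [card_ANbox hN, hcard, Nat.add_sub_cancel]
  unfold gap
  linarith

end ProjWA
end

section
/- For every n ≥ 2 and every m ≥ 0, the initial segment of size m of the balanced order on X_n minimises gap(A) = Σ_{i=1}^n |π_i(A)| − |A| among all weak antichains A in ℤ^n of size m. -/
/-!
Every finite weak antichain is first moved into `X_n`, then made a down-set, without enlarging any
projection. The elementary move is `push i t`: on each line in direction `i`, the lowest point of
height at least `t` is lowered to height `t`. It keeps the cardinality and, because
`π_j (push i t A) ⊆ push i t (π_j A)` for `j ≠ i`, it does not enlarge projections
(`card_pr_push`). After translating `A` into the positive orthant, applying `push i 0` for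
`i = 1, …, n` makes every point have a zero coordinate: a point still positive at the end lies
strictly above some point of `A` (`exists_hasZero`). Pushing until nothing moves then yields a
down-set (`exists_down`).

For a down-set `D`, `π_i D` is counted by the points with `x_i = 0`, so `Σ_i |π_i D|` is
`zeroSum D`, the total number of zero coordinates of points of `D` (`sum_pr_eq_zeroSum`). It remains
to see that initial segments minimise `zeroSum` among down-sets of `X_n` of given size. This is
proved by induction on `n`, together with the statement that they maximise `|S(D)|`, where `S(D)`
(`corner D`) is the set of positive points all of whose `n` coordinate faces lie in `D`
(`hasOptimalInit`).

In the induction step a down-set of `X_{n+1}` is cut in direction `i` into slices `L_a ⊆ X_n`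
(height `a`) and a set `K ⊆ S(L_0)` of positive points at height `0`. Both `zeroSum` and `|S|` are
expressed through `|L_a|`, `zeroSum L_a`, `|K|` and `|K ∩ S(L_a)|`, so replacing every `L_a` by an
initial segment, and `K` by an initial segment of the positive orthant, improves both; here the
sets `S(L_a)` become initial segments of the positive orthant themselves (`corner_lower`). Unless
nothing changes, the sum of the codes of the points drops, where `code` is a natural-number
encoding of the balanced order.

If `D` is compressed in this sense for all directions but is not an initial segment, let `x` be the
first point of `X_n` outside `D` and `y` the last point of `D`. Compression forces `x` to have a
single zero (`unique_zero`), so exchanging `y` for `x` does not increase `zeroSum`. The exchange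
does not decrease `|S|` either (`corner_swap_le`): if anything is lost, then `x` and `y` differ in
every coordinate, the maximum `M` of `y` sits at the zero of `x`, at most `M - 1` points are lost
(lifts of `y`), and at least `M - 1` are gained (lifts of `x`).
-/

namespace ProjWA

variable {ι : Type*}

/-! ### The balanced order and lower sets -/

/-- The balanced order with its decisive coordinate `p`: among the coordinates where `x` and `y`
differ, the pair `(y p, p)` exceeds all pairs `(x i, i)` lexicographically. -/
def BLT {n : ℕ} (x y : Fin n → ℕ) : Prop :=
  ∃ p, x p < y p ∧ ∀ i, x i ≠ y i → x i < y p ∨ (x i = y p ∧ i < p)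

/-- A natural number encoding the balanced order. The exponents `n * x i + i` order the pairs
`(x i, i)` lexicographically, so comparing codes compares the sets of these pairs by the largest
pair in their symmetric difference. -/
def code {n : ℕ} (x : Fin n → ℕ) : ℕ := ∑ i, 2 ^ (n * x i + i)

/-- Coordinates where `x` and `y` agree cancel; on the others the term at `p` beats the sum of
all the distinct smaller powers of two. -/
theorem code_lt_of_BLT {n : ℕ} {x y : Fin n → ℕ} (h : BLT x y) : code x < code y := by
  obtain ⟨p, hp, h⟩ := h
  unfold code
  rw [← Finset.sum_filter_add_sum_filter_not Finset.univ (fun i => x i ≠ y i),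
    ← Finset.sum_filter_add_sum_filter_not Finset.univ (fun i => x i ≠ y i) (fun i => 2 ^ (n * y i + i))]
  have h2 : ∑ i ∈ Finset.univ.filter (fun i => ¬ x i ≠ y i), 2 ^ (n * x i + (i : ℕ))
      = ∑ i ∈ Finset.univ.filter (fun i => ¬ x i ≠ y i), 2 ^ (n * y i + (i : ℕ)) := by
    refine Finset.sum_congr rfl fun i hi => ?_
    simp only [Finset.mem_filter, Finset.mem_univ, true_and, not_not] at hi
    rw [hi]
  rw [h2]
  refine Nat.add_lt_add_right ?_ _
  have hinj : Function.Injective fun i : Fin n => n * x i + (i : ℕ) := by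
    intro i j hij
    have := congrArg (· % n) hij
    simp only [Nat.mul_add_mod, Nat.mod_eq_of_lt i.2, Nat.mod_eq_of_lt j.2] at this
    exact Fin.ext this
  calc ∑ i ∈ Finset.univ.filter (fun i => x i ≠ y i), 2 ^ (n * x i + (i : ℕ))
      = ∑ k ∈ (Finset.univ.filter (fun i => x i ≠ y i)).image
          (fun i : Fin n => n * x i + (i : ℕ)), 2 ^ k := by
        rw [Finset.sum_image hinj.injOn]
    _ < 2 ^ (n * y p + (p : ℕ)) := by
        refine Nat.geomSum_lt le_rfl fun k hk => ?_
        simp only [Finset.mem_image, Finset.mem_filter, Finset.mem_univ, true_and] at hk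
        obtain ⟨i, hi, rfl⟩ := hk
        rcases h i hi with h1 | ⟨h1, h3⟩
        · have := i.2
          nlinarith
        · rw [h1]
          exact Nat.add_lt_add_left h3 _
    _ ≤ _ := Finset.single_le_sum (f := fun i : Fin n => 2 ^ (n * y i + (i : ℕ)))
        (fun _ _ => Nat.zero_le _) (by simp [hp.ne])

theorem BLT_trichotomy {n : ℕ} {x y : Fin n → ℕ} (h : x ≠ y) : BLT x y ∨ BLT y x := by
  have hne : (Finset.univ.filter (fun i => x i ≠ y i)).Nonempty := by
    obtain ⟨i, hi⟩ := Function.ne_iff.1 h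
    exact ⟨i, by simpa using hi⟩
  obtain ⟨p, hp, hmax⟩ := Finset.exists_max_image _
    (fun i : Fin n => n * max (x i) (y i) + (i : ℕ)) hne
  simp only [Finset.mem_filter, Finset.mem_univ, true_and] at hp hmax
  have key : ∀ a c : ℕ, ∀ i : Fin n, n * a + i ≤ n * c + p → a < c ∨ (a = c ∧ i ≤ p) := by
    intro a c i hi
    have := p.2
    rcases lt_trichotomy a c with h | h | h
    · exact .inl h
    · subst h
      exact .inr ⟨rfl, by simpa using hi⟩
    · nlinarith
  rcases lt_or_gt_of_ne hp with hlt | hlt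
  · refine .inl ⟨p, hlt, fun i hi => ?_⟩
    have h1 := hmax i hi
    rw [max_eq_right hlt.le] at h1
    have h2 := key (x i) (y p) i (le_trans (by gcongr; exact le_max_left _ _) h1)
    rcases h2 with h2 | ⟨h2, h3⟩
    · exact .inl h2
    · refine .inr ⟨h2, lt_of_le_of_ne h3 ?_⟩
      rintro rfl
      omega
  · refine .inr ⟨p, hlt, fun i hi => ?_⟩
    have h1 := hmax i hi.symm
    rw [max_eq_left hlt.le] at h1
    have h2 := key (y i) (x p) i (le_trans (by gcongr; exact le_max_right _ _) h1)
    rcases h2 with h2 | ⟨h2, h3⟩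
    · exact .inl h2
    · refine .inr ⟨h2, lt_of_le_of_ne h3 ?_⟩
      rintro rfl
      omega

theorem code_lt_iff {n : ℕ} {x y : Fin n → ℕ} : code x < code y ↔ BLT x y := by
  refine ⟨fun h => ?_, code_lt_of_BLT⟩
  have hne : x ≠ y := by rintro rfl; exact lt_irrefl _ h
  exact (BLT_trichotomy hne).resolve_right fun h' => lt_asymm h (code_lt_of_BLT h')

theorem code_injective {n : ℕ} : Function.Injective (code (n := n)) := by
  intro x y h
  by_contra hne
  rcases BLT_trichotomy hne with h' | h'
  · exact (code_lt_of_BLT h').ne h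
  · exact (code_lt_of_BLT h').ne' h

theorem code_le_of_le {n : ℕ} {x y : Fin n → ℕ} (h : ∀ i, x i ≤ y i) : code x ≤ code y :=
  Finset.sum_le_sum fun i _ => Nat.pow_le_pow_right two_pos (by have := h i; gcongr)

/-- Membership in `X_n` for points with natural-number coordinates. -/
def HasZero {n : ℕ} (x : Fin n → ℕ) : Prop := ∃ i, x i = 0

/-- The number of zero coordinates of a point. -/
def zeros {n : ℕ} (x : Fin n → ℕ) : ℕ := (Finset.univ.filter fun i => x i = 0).card

/-- The total number of zero coordinates of the points of `D`; for a down-set this is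
`Σ_i |π_i D|`. -/
def zeroSum {n : ℕ} (D : Finset (Fin n → ℕ)) : ℕ := ∑ x ∈ D, zeros x

/-- Down-sets in `ℕ^n`. -/
def Down {n : ℕ} (D : Finset (Fin n → ℕ)) : Prop := ∀ x ∈ D, ∀ y, (∀ i, y i ≤ x i) → y ∈ D

/-- Initial segments of the balanced order on `X_n`, with natural-number coordinates. -/
def Init {n : ℕ} (D : Finset (Fin n → ℕ)) : Prop :=
  (∀ x ∈ D, HasZero x) ∧ ∀ x ∈ D, ∀ y, HasZero y → code y < code x → y ∈ D

/-- The set `S(D)` of positive points all of whose faces, obtained by replacing one coordinate by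
`0`, lie in `D`. The box only serves to make it a finite set: for `n ≥ 2` it imposes no condition
(`mem_corner`), whereas for `n = 1` the true set may be infinite. -/
def corner {n : ℕ} (D : Finset (Fin n → ℕ)) : Finset (Fin n → ℕ) :=
  (Fintype.piFinset fun _ => Finset.range (∑ x ∈ D, ∑ i, x i + 1)).filter
    fun x => (∀ k, 0 < x k) ∧ ∀ k, Function.update x k 0 ∈ D

theorem coord_le {n : ℕ} {D : Finset (Fin n → ℕ)} {x : Fin n → ℕ} (hx : x ∈ D) (i : Fin n) :
    x i ≤ ∑ x ∈ D, ∑ i, x i :=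
  (Finset.single_le_sum (f := x) (fun _ _ => Nat.zero_le _) (Finset.mem_univ i)).trans
    (Finset.single_le_sum (f := fun x : Fin n → ℕ => ∑ i, x i) (fun _ _ => Nat.zero_le _) hx)

theorem mem_corner {n : ℕ} (hn : 2 ≤ n) {D : Finset (Fin n → ℕ)} {x : Fin n → ℕ} :
    x ∈ corner D ↔ (∀ k, 0 < x k) ∧ ∀ k, Function.update x k 0 ∈ D := by
  simp only [corner, Finset.mem_filter, Fintype.mem_piFinset, Finset.mem_range,
    and_iff_right_iff_imp]
  rintro ⟨_, h⟩ k
  have : Nontrivial (Fin n) := Fin.nontrivial_iff_two_le.2 hn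
  obtain ⟨l, hl⟩ := exists_ne k
  have := coord_le (h l) k
  rw [Function.update_of_ne hl.symm] at this
  omega

theorem Init.down {n : ℕ} {D : Finset (Fin n → ℕ)} (h : Init D) : Down D := by
  intro x hx y hyx
  rcases (code_le_of_le hyx).lt_or_eq with h' | h'
  · obtain ⟨i, hi⟩ := h.1 x hx
    exact h.2 x hx y ⟨i, by have := hyx i; omega⟩ h'
  · rwa [code_injective h']

/-- Lower sets in the same subtype `{x | P x}`, with respect to an injective rank function, are
comparable; the smaller one is contained in the larger. -/
theorem subset_of_card_le {α : Type*} [DecidableEq α] {f : α → ℕ} (hf : Function.Injective f)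
    {P : α → Prop} {A B : Finset α} (hA : ∀ x ∈ A, P x)
    (hB : ∀ x ∈ B, P x) (hAl : ∀ x ∈ A, ∀ y, P y → f y < f x → y ∈ A)
    (hBl : ∀ x ∈ B, ∀ y, P y → f y < f x → y ∈ B) (h : A.card ≤ B.card) : A ⊆ B := by
  intro a ha
  by_contra hab
  have hBA : B ⊆ A := by
    intro b hb
    rcases lt_trichotomy (f a) (f b) with h1 | h1 | h1
    · exact absurd (hBl b hb a (hA a ha) h1) hab
    · rwa [← hf h1]
    · exact hAl a ha b (hB b hb) h1
  have := Finset.eq_of_subset_of_card_le hBA h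
  exact hab (this ▸ ha)

/-- Among the subsets of `{x | P x}` of a given size, the lower set has the smallest sum of any
function that is strictly increasing in `f`. -/
theorem sum_lt_of_lower {α : Type*} [DecidableEq α] {f : α → ℕ} (hf : Function.Injective f)
    {P : α → Prop} {A B : Finset α}
    (hB : ∀ x ∈ B, P x) (hAl : ∀ x ∈ A, ∀ y, P y → f y < f x → y ∈ A)
    (h : A.card = B.card) (hne : A ≠ B) {g : α → ℕ} (hg : ∀ x y, f x < f y → g x < g y) :
    ∑ x ∈ A, g x < ∑ x ∈ B, g x := by
  have hlt : ∀ a ∈ A \ B, ∀ b ∈ B \ A, g a < g b := by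
    intro a ha b hb
    simp only [Finset.mem_sdiff] at ha hb
    apply hg
    rcases lt_trichotomy (f a) (f b) with h1 | h1 | h1
    · exact h1
    · exact absurd (hf h1 ▸ ha.1) hb.2
    · exact absurd (hAl a ha.1 b (hB b hb.1) h1) hb.2
  have hc : (A \ B).card = (B \ A).card := Finset.card_sdiff_comm h
  have hn : (A \ B).Nonempty := by
    rw [Finset.sdiff_nonempty]
    exact fun h' => hne (Finset.eq_of_subset_of_card_le h' h.ge)
  rw [← Finset.sum_inter_add_sum_sdiff A B, ← Finset.sum_inter_add_sum_sdiff B A,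
    Finset.inter_comm B A]
  refine Nat.add_lt_add_left ?_ _
  let e := Finset.equivOfCardEq hc
  rw [← Finset.sum_coe_sort (A \ B), ← Finset.sum_coe_sort (B \ A), ← e.sum_comp]
  refine Finset.sum_lt_sum_of_nonempty ?_ fun a _ => hlt a a.2 _ (e a).2
  exact ⟨⟨hn.choose, hn.choose_spec⟩, Finset.mem_univ _⟩

theorem sum_le_of_lower {α : Type*} [DecidableEq α] {f : α → ℕ} (hf : Function.Injective f)
    {P : α → Prop} {A B : Finset α}
    (hB : ∀ x ∈ B, P x) (hAl : ∀ x ∈ A, ∀ y, P y → f y < f x → y ∈ A)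
    (h : A.card = B.card) {g : α → ℕ} (hg : ∀ x y, f x < f y → g x < g y) :
    ∑ x ∈ A, g x ≤ ∑ x ∈ B, g x := by
  by_cases hne : A = B
  · rw [hne]
  · exact (sum_lt_of_lower hf hB hAl h hne hg).le

/-- The `k` smallest elements of `B` with respect to `f`. -/
theorem exists_lower_subset {α : Type*} [DecidableEq α] (f : α → ℕ)
    (B : Finset α) {k : ℕ} (hk : k ≤ B.card) :
    ∃ A ⊆ B, A.card = k ∧ ∀ x ∈ A, ∀ y ∈ B, f y < f x → y ∈ A := by
  induction k with
  | zero => exact ⟨∅, by simp, rfl, by simp⟩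
  | succ k ih =>
    obtain ⟨A, hAB, hc, hA⟩ := ih (by omega)
    have hne : (B \ A).Nonempty := by
      rw [← Finset.card_pos, Finset.card_sdiff_of_subset hAB]; omega
    obtain ⟨b, hb, hmin⟩ := Finset.exists_min_image _ f hne
    simp only [Finset.mem_sdiff] at hb hmin
    refine ⟨insert b A, Finset.insert_subset hb.1 hAB, by
      rw [Finset.card_insert_of_notMem hb.2, hc], fun x hx y hy hyx => ?_⟩
    rw [Finset.mem_insert] at hx ⊢
    right
    by_contra hyA
    rcases hx with rfl | hx
    · exact absurd (hmin y ⟨hy, hyA⟩) (by omega)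
    · exact hyA (hA x hx y hy hyx)

/-! ### Exchanging one point in a compressed down-set -/

/-- `D` is compressed: in every direction `i`, the points of each slice `x i = a` with a zero outside
`i` form an initial segment, and so do the points whose only zero is at `i`. -/
def Comp {n : ℕ} (D : Finset (Fin n → ℕ)) : Prop :=
  ∀ i x y, y ∈ D → BLT x y → x i = y i →
    (((∃ j, j ≠ i ∧ x j = 0) ∧ ∃ j, j ≠ i ∧ y j = 0) ∨
      (x i = 0 ∧ (∀ j, j ≠ i → 0 < x j) ∧ ∀ j, j ≠ i → 0 < y j)) → x ∈ D

/-- In a compressed down-set, a point missing below `y ∈ D` has only one zero: otherwise, zeroing a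
suitable coordinate of `y` gives a point of `D` above `x` in a common slice. -/
theorem unique_zero {n : ℕ} {D : Finset (Fin n → ℕ)} (hD : Down D)
    (hC : Comp D) {x y : Fin n → ℕ} (hxD : x ∉ D) (hyD : y ∈ D) (hy : HasZero y)
    (hxy : BLT x y) {j₁ j₂ : Fin n} (h₁ : x j₁ = 0) (h₂ : x j₂ = 0) : j₁ = j₂ := by
  by_contra hne
  apply hxD
  have hx : ∀ i, ∃ j, j ≠ i ∧ x j = 0 := by
    intro i
    by_cases h : j₁ = i
    · exact ⟨j₂, fun h' => hne (h.trans h'.symm), h₂⟩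
    · exact ⟨j₁, h, h₁⟩
  obtain ⟨p, hp, hpm⟩ := hxy
  obtain ⟨k, hk⟩ := hy
  by_cases hA : ∃ i, x i = y i
  · obtain ⟨i, hi⟩ := hA
    have hyi : ∀ j, j ≠ i → y j ≠ 0 := fun j hj h =>
      hxD (hC i x y hyD ⟨p, hp, hpm⟩ hi (.inl ⟨hx i, j, hj, h⟩))
    have hki : k = i := by
      by_contra h
      exact hyi k h hk
    subst hki
    have hd : ∀ l, l ≠ k → x l ≠ y l := fun l hl h =>
      hxD (hC l x y hyD ⟨p, hp, hpm⟩ h (.inl ⟨hx l, k, hl.symm, hk⟩))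
    by_cases hl : ∃ l, l ≠ k ∧ l ≠ p
    · obtain ⟨l, hlk, hlp⟩ := hl
      refine hC k x (Function.update y l 0) (hD y hyD _ fun i => ?_) ⟨p, ?_, fun m hm => ?_⟩ ?_
        (.inl ⟨hx k, l, hlk, by simp⟩)
      · by_cases h : i = l
        · subst h; simp
        · simp [h]
      · simpa [hlp.symm] using hp
      · rw [Function.update_of_ne hlp.symm]
        apply hpm
        by_cases h : m = l
        · exact hd m (h ▸ hlk)
        · simpa [h] using hm
      · rwa [Function.update_of_ne hlk.symm]
    · push Not at hl
      refine hD y hyD x fun m => ?_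
      by_cases h : m = k
      · rw [h, hi]
      · rw [hl m h]; exact hp.le
  · push Not at hA
    obtain ⟨j, hjp, hj⟩ := hx p
    refine hC j x (Function.update y j 0) (hD y hyD _ fun i => ?_) ⟨p, ?_, fun m hm => ?_⟩ ?_
        (.inl ⟨hx j, k, ?_, ?_⟩)
    · by_cases h : i = j
      · subst h; simp
      · simp [h]
    · simpa [hjp.symm] using hp
    · rw [Function.update_of_ne hjp.symm]
      exact hpm m (hA m)
    · simp [hj]
    · rintro rfl
      exact hA k (hj.trans hk.symm)
    · by_cases h : k = j
      · simp [h]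
      · simpa [h] using hk

/-- Exchanging the last point `y` of a compressed down-set for a missing point `x` with a single
zero does not decrease the size of the corner set. -/
theorem corner_swap_le {n : ℕ} (hn : 2 ≤ n) {D : Finset (Fin n → ℕ)} (hD : Down D)
    (hC : Comp D) {x y : Fin n → ℕ} (hxD : x ∉ D) (hyD : y ∈ D) (hx : HasZero x)
    (hxy : BLT x y) (hmax : ∀ z ∈ D, code z ≤ code y)
    (hone : ∀ j₁ j₂, x j₁ = 0 → x j₂ = 0 → j₁ = j₂) :
    (corner D).card ≤ (corner (insert x (D.erase y))).card := by
  rw [← Finset.card_sdiff_le_card_sdiff_iff]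
  rcases (corner D \ corner (insert x (D.erase y))).eq_empty_or_nonempty with he | ⟨s₀, hs₀⟩
  · simp [he]
  -- a point of the corner set which is lost has `y` as one of its faces
  have hloss : ∀ s ∈ corner D \ corner (insert x (D.erase y)),
      (∀ l, 0 < s l) ∧ (∀ l, Function.update s l 0 ∈ D) ∧ ∃ k, Function.update s k 0 = y := by
    intro s hs
    rw [Finset.mem_sdiff, mem_corner hn, mem_corner hn] at hs
    refine ⟨hs.1.1, hs.1.2, ?_⟩
    by_contra! h
    exact hs.2 ⟨hs.1.1, fun k =>
      Finset.mem_insert_of_mem (Finset.mem_erase.2 ⟨h k, hs.1.2 k⟩)⟩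
  obtain ⟨hs₀p, hs₀D, k, hk⟩ := hloss s₀ hs₀
  obtain ⟨j, hj⟩ := hx
  obtain ⟨p, hp, hpm⟩ := hxy
  have hyk : y k = 0 := by rw [← hk]; simp
  have hys : ∀ l, l ≠ k → y l = s₀ l := fun l hl => by rw [← hk]; simp [hl]
  have hypos : ∀ l, l ≠ k → 0 < y l := fun l hl => by rw [hys l hl]; exact hs₀p l
  have hxpos : ∀ l, l ≠ j → 0 < x l := fun l hl =>
    Nat.pos_of_ne_zero fun h => hl (hone l j h hj)
  have hne : ∀ i, x i ≠ y i := by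
    intro i hi
    by_cases h0 : x i = 0
    · have h1 : i = j := hone _ _ h0 hj
      subst h1
      have h2 : i = k := by
        by_contra h2
        have := hypos i h2
        omega
      subst h2
      exact hxD (hC i x y hyD ⟨p, hp, hpm⟩ hi (.inr ⟨h0, hxpos, hypos⟩))
    · refine hxD (hC i x y hyD ⟨p, hp, hpm⟩ hi (.inl ⟨⟨j, ?_, hj⟩, k, ?_, hyk⟩))
      · rintro rfl; exact h0 hj
      · rintro rfl; exact h0 (hi.trans hyk)
  have hjk : j ≠ k := by
    rintro rfl
    exact hne j (hj.trans hyk.symm)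
  have hxle : ∀ m, x m ≤ y p := fun m => by
    rcases hpm m (hne m) with h | h
    · exact h.le
    · exact h.1.le
  have hpk : p ≠ k := by rintro rfl; omega
  have hpj : p = j := by
    by_contra hpj
    refine hxD (hC j x _ (hs₀D j) ⟨p, ?_, fun m _ => ?_⟩ ?_ (.inr ⟨hj, hxpos, fun l hl => ?_⟩))
    · rw [Function.update_of_ne hpj, ← hys p hpk]; exact hp
    · rw [Function.update_of_ne hpj, ← hys p hpk]; exact hpm m (hne m)
    · simp [hj]
    · rw [Function.update_of_ne hl]; exact hs₀p l
  subst hpj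
  have hsub1 : corner D \ corner (insert x (D.erase y)) ⊆
      (Finset.Ico 1 (y p)).image fun a => Function.update y k a := by
    intro s hs
    obtain ⟨hsp, hsD, k', hk'⟩ := hloss s hs
    have hkk : k' = k := by
      by_contra h
      have h1 := hypos k' h
      rw [← hk'] at h1
      simp at h1
    subst hkk
    have hsy : ∀ l, l ≠ k' → s l = y l := fun l hl => by rw [← hk']; simp [hl]
    rw [Finset.mem_image]
    refine ⟨s k', Finset.mem_Ico.2 ⟨hsp k', ?_⟩, by rw [← hk']; simp⟩
    by_contra! hge
    -- otherwise every coordinate of `s` is at least `y p`, and `x` lies below a face of `s`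
    have hge' : ∀ l, l ≠ k' → s k' ≤ y l := by
      intro l hl
      by_contra! hlt
      refine absurd (hmax _ (hsD l)) (not_le.2 (code_lt_of_BLT ⟨k', ?_, fun m hm => ?_⟩))
      · rw [hyk, Function.update_of_ne hl.symm]; exact hsp k'
      · rw [Function.update_of_ne hl.symm]
        by_cases h1 : m = k'
        · rw [h1, hyk]; exact .inl (hsp k')
        · by_cases h2 : m = l
          · rw [h2]; exact .inl hlt
          · exact absurd (by rw [Function.update_of_ne h2, hsy m h1]) hm
    refine hxD (hD _ (hsD p) x fun m => ?_)
    by_cases h1 : m = p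
    · rw [h1, hj]; exact Nat.zero_le _
    · rw [Function.update_of_ne h1]
      by_cases h2 : m = k'
      · rw [h2]; exact (hxle _).trans hge
      · rw [hsy m h2]
        exact (hxle m).trans (hge.trans (hge' m h2))
  have hsub2 : ((Finset.Ico 1 (y p)).image fun b => Function.update x p b) ⊆
      corner (insert x (D.erase y)) \ corner D := by
    intro t ht
    simp only [Finset.mem_image, Finset.mem_Ico] at ht
    obtain ⟨b, ⟨hb1, hb2⟩, rfl⟩ := ht
    have hface : Function.update (Function.update x p b) p 0 = x := by
      rw [Function.update_idem, ← hj, Function.update_eq_self]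
    rw [Finset.mem_sdiff, mem_corner hn, mem_corner hn]
    have htpos : ∀ l, 0 < Function.update x p b l := by
      intro l
      by_cases h : l = p
      · subst h; rw [Function.update_self]; exact hb1
      · rw [Function.update_of_ne h]; exact hxpos l h
    refine ⟨⟨htpos, fun l => ?_⟩, fun h => hxD (by simpa only [hface] using h.2 p)⟩
    by_cases hl : l = p
    · subst hl
      rw [hface]
      exact Finset.mem_insert_self _ _
    · refine Finset.mem_insert_of_mem (Finset.mem_erase.2 ⟨fun h => ?_, ?_⟩)
      · have := congrFun h p
        rw [Function.update_of_ne (Ne.symm hl), Function.update_self] at this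
        omega
      · have hup : Function.update s₀ l 0 p = y p := by
          rw [Function.update_of_ne (Ne.symm hl), hys p hpk]
        refine hC l _ _ (hs₀D l) ⟨p, ?_, fun m hm => ?_⟩ (by simp)
          (.inr ⟨by simp, fun m hm => ?_, fun m hm => ?_⟩)
        · rw [hup, Function.update_of_ne (Ne.symm hl), Function.update_self]
          exact hb2
        · rw [hup]
          by_cases h1 : m = l
          · subst h1; simp at hm
          · rw [Function.update_of_ne h1]
            by_cases h2 : m = p
            · subst h2; left; simpa using hb2
            · rw [Function.update_of_ne h2]
              exact hpm m (hne m)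
        · rw [Function.update_of_ne hm]; exact htpos m
        · rw [Function.update_of_ne hm]; exact hs₀p m
  calc _ ≤ _ := Finset.card_le_card hsub1
    _ ≤ (Finset.Ico 1 (y p)).card := Finset.card_image_le
    _ = _ := (Finset.card_image_of_injective _ (Function.update_injective x p)).symm
    _ ≤ _ := Finset.card_le_card hsub2

theorem zeros_pos {n : ℕ} {x : Fin n → ℕ} (h : HasZero x) : 1 ≤ zeros x := by
  obtain ⟨i, hi⟩ := h
  exact Finset.card_pos.2 ⟨i, by simpa using hi⟩

/-- `D'` is at least as good as `D` for both extremal quantities, and earlier in total code. -/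
structure Better {n : ℕ} (D' D : Finset (Fin n → ℕ)) : Prop where
  down : Down D'
  hasZero : ∀ x ∈ D', HasZero x
  card_eq : D'.card = D.card
  zeroSum_le : zeroSum D' ≤ zeroSum D
  corner_le : (corner D).card ≤ (corner D').card
  code_lt : ∑ x ∈ D', code x < ∑ x ∈ D, code x

/-- Exchange the last point of `D` for the first point of `X_n` missing from `D`. -/
theorem exists_swap {n : ℕ} (hn : 2 ≤ n) {D : Finset (Fin n → ℕ)} (hD : Down D)
    (hX : ∀ x ∈ D, HasZero x) (hC : Comp D) (hI : ¬ Init D) :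
    ∃ D' : Finset (Fin n → ℕ), Better D' D := by
  have hbad : ∃ c, ∃ x, HasZero x ∧ x ∉ D ∧ code x = c ∧ ∃ y ∈ D, code x < code y := by
    simp only [Init, not_and, not_forall] at hI
    obtain ⟨y, hy, x, hx, hlt, hxD⟩ := hI hX
    exact ⟨_, x, hx, hxD, rfl, y, hy, hlt⟩
  classical
  obtain ⟨x, hx, hxD, hxc, y', hy', hlt'⟩ := Nat.find_spec hbad
  have hmin : ∀ z, HasZero z → code z < code x → z ∈ D := by
    intro z hz hzx
    by_contra hzD
    rw [hxc] at hzx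
    exact Nat.find_min hbad hzx ⟨z, hz, hzD, rfl, y', hy', by omega⟩
  obtain ⟨y, hyD, hmax⟩ := D.exists_max_image code ⟨y', hy'⟩
  have hlt : code x < code y := hlt'.trans_le (hmax _ hy')
  have hone : ∀ j₁ j₂, x j₁ = 0 → x j₂ = 0 → j₁ = j₂ := fun _ _ h₁ h₂ =>
    unique_zero hD hC hxD hyD (hX y hyD) (code_lt_iff.1 hlt) h₁ h₂
  have hxe : x ∉ D.erase y := fun h => hxD (Finset.mem_of_mem_erase h)
  refine ⟨insert x (D.erase y), ?_, ?_, ?_, ?_,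
    corner_swap_le hn hD hC hxD hyD hx (code_lt_iff.1 hlt) hmax hone, ?_⟩
  · intro z hz u hu
    rw [Finset.mem_insert, Finset.mem_erase] at hz ⊢
    by_cases hux : u = x
    · exact .inl hux
    refine .inr ⟨?_, ?_⟩
    · rintro rfl
      rcases hz with rfl | hz
      · have := code_le_of_le hu
        omega
      · exact hz.1 (code_injective (le_antisymm (hmax z hz.2) (code_le_of_le hu)))
    · rcases hz with rfl | hz
      · obtain ⟨i, hi⟩ := hx
        refine hmin u ⟨i, by have := hu i; omega⟩ (lt_of_le_of_ne (code_le_of_le hu) ?_)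
        exact fun h => hux (code_injective h)
      · exact hD z hz.2 u hu
  · intro z hz
    rw [Finset.mem_insert, Finset.mem_erase] at hz
    rcases hz with rfl | hz
    · exact hx
    · exact hX z hz.2
  · rw [Finset.card_insert_of_notMem hxe, Finset.card_erase_add_one hyD]
  · have h1 : zeros x ≤ 1 := Finset.card_le_one.2 (by simpa using fun a ha b hb => hone a b ha hb)
    have h2 := zeros_pos (hX y hyD)
    have h3 := Finset.sum_erase_add D zeros hyD
    rw [zeroSum, zeroSum, Finset.sum_insert hxe]
    omega
  · have h3 := Finset.sum_erase_add D code hyD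
    rw [Finset.sum_insert hxe]
    omega

/-! ### Slices of a down-set -/

/-- The point with `a` inserted at position `i`; non-dependent form of `Fin.insertNth`. -/
abbrev ins {n : ℕ} (i : Fin (n + 1)) (a : ℕ) (x : Fin n → ℕ) : Fin (n + 1) → ℕ :=
  Fin.insertNth (α := fun _ => ℕ) i a x

theorem exists_ins {n : ℕ} (i : Fin (n + 1)) (x : Fin (n + 1) → ℕ) :
    ∃ a x', x = ins i a x' :=
  ⟨x i, i.removeNth x, (Fin.insertNth_self_removeNth i x).symm⟩

theorem ins_inj {n : ℕ} {i : Fin (n + 1)} {a b : ℕ} {x y : Fin n → ℕ} :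
    ins i a x = ins i b y ↔ a = b ∧ x = y := Fin.insertNth_inj

theorem BLT_ins {n : ℕ} {i : Fin (n + 1)} {a : ℕ} {x y : Fin n → ℕ} :
    BLT (ins i a x) (ins i a y) ↔ BLT x y := by
  simp [BLT, Fin.exists_iff_succAbove i, Fin.forall_iff_succAbove i]

theorem zeros_ins {n : ℕ} (i : Fin (n + 1)) (a : ℕ) (x : Fin n → ℕ) :
    zeros (ins i a x) = (if a = 0 then 1 else 0) + zeros x := by
  simp only [zeros, Finset.card_filter]
  rw [Fin.sum_univ_succAbove _ i]
  simp

theorem hasZero_ins {n : ℕ} (i : Fin (n + 1)) (a : ℕ) (x : Fin n → ℕ) :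
    HasZero (ins i a x) ↔ a = 0 ∨ HasZero x := by
  simp [HasZero, Fin.exists_iff_succAbove i]

theorem update_ins {n : ℕ} (i : Fin (n + 1)) (a b : ℕ) (x : Fin n → ℕ) :
    Function.update (ins i a x) i b = ins i b x := Fin.update_insertNth _ _ _ _

theorem update_ins_succAbove {n : ℕ} (i : Fin (n + 1)) (a b : ℕ) (x : Fin n → ℕ) (k : Fin n) :
    Function.update (ins i a x) (i.succAbove k) b = ins i a (Function.update x k b) :=
  (Fin.insertNth_update _ _ _ _ _).symm

/-- The set with slice `L a` at height `a < N` in direction `i`, together with `K` at height `0`. -/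
def build {n : ℕ} (i : Fin (n + 1)) (L : ℕ → Finset (Fin n → ℕ)) (K : Finset (Fin n → ℕ))
    (N : ℕ) : Finset (Fin (n + 1) → ℕ) :=
  ((Finset.range N).biUnion fun a => (L a).image (ins i a)) ∪ K.image (ins i 0)

theorem ins_mem_build {n : ℕ} {i : Fin (n + 1)} {L : ℕ → Finset (Fin n → ℕ)}
    {K : Finset (Fin n → ℕ)} {N a : ℕ} {x : Fin n → ℕ} :
    ins i a x ∈ build i L K N ↔ (a < N ∧ x ∈ L a) ∨ (a = 0 ∧ x ∈ K) := by
  simp only [build, Finset.mem_union, Finset.mem_biUnion, Finset.mem_range, Finset.mem_image,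
    ins_inj]
  constructor
  · rintro (⟨b, hb, y, hy, rfl, rfl⟩ | ⟨y, hy, rfl, rfl⟩)
    · exact .inl ⟨hb, hy⟩
    · exact .inr ⟨rfl, hy⟩
  · rintro (⟨hb, hy⟩ | ⟨rfl, hy⟩)
    · exact .inl ⟨a, hb, x, hy, rfl, rfl⟩
    · exact .inr ⟨x, hy, rfl, rfl⟩

theorem sum_build {n : ℕ} (i : Fin (n + 1)) {L : ℕ → Finset (Fin n → ℕ)}
    {K : Finset (Fin n → ℕ)} (N : ℕ) (h : ∀ x ∈ L 0, x ∉ K) (g : (Fin (n + 1) → ℕ) → ℕ) :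
    ∑ x ∈ build i L K N, g x
      = ∑ a ∈ Finset.range N, ∑ x ∈ L a, g (ins i a x) + ∑ x ∈ K, g (ins i 0 x) := by
  rw [build, Finset.sum_union, Finset.sum_biUnion]
  · congr 1
    · refine Finset.sum_congr rfl fun a _ => Finset.sum_image fun x _ y _ hxy => (ins_inj.1 hxy).2
    · exact Finset.sum_image fun x _ y _ hxy => (ins_inj.1 hxy).2
  · intro a _ b _ hab
    rw [Function.onFun, Finset.disjoint_left]
    intro z hz hz'
    simp only [Finset.mem_image] at hz hz'
    obtain ⟨x, _, rfl⟩ := hz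
    obtain ⟨y, _, hy⟩ := hz'
    exact hab (ins_inj.1 hy).1.symm
  · rw [Finset.disjoint_left]
    intro z hz hz'
    simp only [Finset.mem_image, Finset.mem_biUnion] at hz hz'
    obtain ⟨a, _, x, hx, rfl⟩ := hz
    obtain ⟨y, hy, hyx⟩ := hz'
    obtain ⟨rfl, rfl⟩ := ins_inj.1 hyx
    exact h _ hx hy

theorem card_build {n : ℕ} (i : Fin (n + 1)) {L : ℕ → Finset (Fin n → ℕ)}
    {K : Finset (Fin n → ℕ)} (N : ℕ) (h : ∀ x ∈ L 0, x ∉ K) :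
    (build i L K N).card = ∑ a ∈ Finset.range N, (L a).card + K.card := by
  simp only [Finset.card_eq_sum_ones, sum_build i N h]

/-- Conditions under which `build i L K N` is a down-set of `X_{n+1}` with the points of `L a`
having a zero outside `i` and those of `K` having none. -/
structure IsSlicing {n : ℕ} (L : ℕ → Finset (Fin n → ℕ)) (K : Finset (Fin n → ℕ)) (N : ℕ) :
    Prop where
  hasZero : ∀ a, ∀ x ∈ L a, HasZero x
  down : ∀ a, Down (L a)
  anti : ∀ a b, a ≤ b → L b ⊆ L a
  empty : ∀ a, N ≤ a → L a = ∅
  sub : K ⊆ corner (L 0)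
  downK : ∀ x ∈ K, ∀ y, ¬ HasZero y → (∀ i, y i ≤ x i) → y ∈ K

section

variable {n : ℕ} {L : ℕ → Finset (Fin n → ℕ)} {K : Finset (Fin n → ℕ)} {N : ℕ}

theorem IsSlicing.ins_mem (h : IsSlicing L K N) {i : Fin (n + 1)} {a : ℕ} {x : Fin n → ℕ} :
    ins i a x ∈ build i L K N ↔ x ∈ L a ∨ (a = 0 ∧ x ∈ K) := by
  rw [ins_mem_build]
  refine or_congr_left ⟨fun h => h.2, fun h' => ⟨?_, h'⟩⟩
  by_contra hN
  rw [h.empty a (by omega)] at h'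
  simp at h'

theorem IsSlicing.not_hasZero (h : IsSlicing L K N) (hn : 2 ≤ n) {x : Fin n → ℕ} (hx : x ∈ K) :
    ¬ HasZero x := by
  rintro ⟨i, hi⟩
  have := ((mem_corner hn).1 (h.sub hx)).1 i
  omega

theorem IsSlicing.disj (h : IsSlicing L K N) (hn : 2 ≤ n) : ∀ x ∈ L 0, x ∉ K :=
  fun x hx hK => h.not_hasZero hn hK (h.hasZero 0 x hx)

theorem IsSlicing.build_down (h : IsSlicing L K N) (hn : 2 ≤ n) (i : Fin (n + 1)) :
    Down (build i L K N) := by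
  intro u hu v hvu
  obtain ⟨a, x, rfl⟩ := exists_ins i u
  obtain ⟨b, y, rfl⟩ := exists_ins i v
  rw [Fin.forall_iff_succAbove i] at hvu
  simp only [Fin.insertNth_apply_same, Fin.insertNth_apply_succAbove] at hvu
  obtain ⟨hba, hyx⟩ := hvu
  rw [h.ins_mem] at hu ⊢
  rcases hu with hx | ⟨rfl, hx⟩
  · exact .inl (h.anti b a hba (h.down a x hx y hyx))
  · obtain rfl : b = 0 := by omega
    by_cases hy : HasZero y
    · obtain ⟨k, hk⟩ := hy
      refine .inl (h.down 0 _ (((mem_corner hn).1 (h.sub hx)).2 k) y fun m => ?_)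
      by_cases hm : m = k
      · subst hm; omega
      · rw [Function.update_of_ne hm]; exact hyx m
    · exact .inr ⟨rfl, h.downK x hx y hy hyx⟩

theorem IsSlicing.build_hasZero (h : IsSlicing L K N) (i : Fin (n + 1)) :
    ∀ x ∈ build i L K N, HasZero x := by
  intro u hu
  obtain ⟨a, x, rfl⟩ := exists_ins i u
  rw [h.ins_mem] at hu
  rw [hasZero_ins]
  rcases hu with hx | ⟨rfl, hx⟩
  · exact .inr (h.hasZero a x hx)
  · exact .inl rfl

theorem zeros_eq_zero {x : Fin n → ℕ} (h : ¬ HasZero x) : zeros x = 0 := by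
  simpa [zeros, Finset.card_eq_zero, Finset.filter_eq_empty_iff, HasZero] using h

theorem IsSlicing.zeroSum_build (h : IsSlicing L K N) (hn : 2 ≤ n) (i : Fin (n + 1)) :
    zeroSum (build i L K N)
      = ∑ a ∈ Finset.range N, ((if a = 0 then 1 else 0) * (L a).card + zeroSum (L a)) + K.card := by
  rw [zeroSum, sum_build i N (h.disj hn)]
  congr 1
  · refine Finset.sum_congr rfl fun a _ => ?_
    simp only [zeros_ins, Finset.sum_add_distrib, zeroSum, Finset.sum_const, smul_eq_mul]
    ring
  · rw [Finset.card_eq_sum_ones]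
    refine Finset.sum_congr rfl fun x hx => ?_
    rw [zeros_ins, zeros_eq_zero (h.not_hasZero hn hx)]
    rfl

/-- A positive point `ins i a x` is in the corner set exactly when its face in direction `i` gives
`x ∈ K` and its other faces give `x ∈ corner (L a)`. -/
theorem IsSlicing.card_corner_build (h : IsSlicing L K N) (hn : 2 ≤ n) (i : Fin (n + 1)) :
    (corner (build i L K N)).card
      = ∑ a ∈ Finset.range N, if a = 0 then 0 else (K ∩ corner (L a)).card := by
  have : corner (build i L K N)
      = build i (fun a => if a = 0 then ∅ else K ∩ corner (L a)) ∅ N := by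
    ext u
    obtain ⟨a, x, rfl⟩ := exists_ins i u
    rw [mem_corner (by omega), ins_mem_build, Fin.forall_iff_succAbove i,
      Fin.forall_iff_succAbove i]
    simp only [Fin.insertNth_apply_same, Fin.insertNth_apply_succAbove, update_ins,
      update_ins_succAbove, h.ins_mem, Finset.notMem_empty, and_false, or_false]
    constructor
    · rintro ⟨⟨ha, hx⟩, h0, hk⟩
      have ha' : a ≠ 0 := ha.ne'
      have hxL : ∀ k, Function.update x k 0 ∈ L a := fun k =>
        (hk k).resolve_right fun h => ha' h.1
      have hn0 : 0 < n := by omega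
      have haN : a < N := by
        by_contra hN
        have := hxL ⟨0, hn0⟩
        rw [h.empty a (by omega)] at this
        simp at this
      have hxK : x ∈ K := by
        rcases h0 with h0 | h0
        · obtain ⟨k, hk⟩ := h.hasZero 0 x h0
          have := hx k
          omega
        · exact h0.2
      rw [if_neg ha', Finset.mem_inter, mem_corner hn]
      exact ⟨haN, hxK, hx, hxL⟩
    · rintro ⟨haN, hx⟩
      split_ifs at hx with ha
      · simp at hx
      · rw [Finset.mem_inter, mem_corner hn] at hx
        exact ⟨⟨by omega, hx.2.1⟩, .inr ⟨trivial, hx.1⟩, fun k => .inl (hx.2.2 k)⟩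
  rw [this, card_build i N (by simp)]
  simp only [Finset.card_empty, add_zero]
  exact Finset.sum_congr rfl fun a _ => by split_ifs <;> simp

end

/-- The corner set of an initial segment is an initial segment of the positive orthant. If `y`
precedes `x` with decisive coordinate `p`, the face of `y` at `k ≠ p` precedes that of `x`; the face
at `p` precedes the face of `x` at another coordinate where `x` and `y` differ, or equals the face
of `x` at `p` if there is none. -/
theorem corner_lower {n : ℕ} (hn : 2 ≤ n) {I : Finset (Fin n → ℕ)} (hI : Init I) :
    ∀ x ∈ corner I, ∀ y, ¬ HasZero y → code y < code x → y ∈ corner I := by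
  intro x hx y hy hyx
  rw [mem_corner hn] at hx ⊢
  obtain ⟨hxp, hxI⟩ := hx
  refine ⟨fun k => Nat.pos_of_ne_zero fun h => hy ⟨k, h⟩, fun k => ?_⟩
  have hz : HasZero (Function.update y k 0) := ⟨k, by simp⟩
  obtain ⟨p, hp, hpm⟩ := code_lt_iff.1 hyx
  by_cases hkp : k = p
  · subst hkp
    by_cases hj : ∃ j, j ≠ k ∧ y j ≠ x j
    · obtain ⟨j, hjk, hj⟩ := hj
      refine hI.2 _ (hxI j) _ hz (code_lt_of_BLT ⟨k, ?_, fun m hm => ?_⟩)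
      · rw [Function.update_self, Function.update_of_ne hjk.symm]
        exact hxp k
      · rw [Function.update_of_ne hjk.symm]
        by_cases hmk : m = k
        · subst hmk; rw [Function.update_self]; exact .inl (hxp m)
        · rw [Function.update_of_ne hmk] at hm ⊢
          apply hpm
          by_cases hmj : m = j
          · rw [hmj]; exact hj
          · rwa [Function.update_of_ne hmj] at hm
    · push Not at hj
      have : Function.update y k 0 = Function.update x k 0 := by
        funext m
        by_cases hmk : m = k
        · subst hmk; simp
        · simp [hmk, hj m hmk]
      rw [this]
      exact hxI k
  · refine hI.2 _ (hxI k) _ hz (code_lt_of_BLT ⟨p, ?_, fun m hm => ?_⟩)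
    · rw [Function.update_of_ne (Ne.symm hkp), Function.update_of_ne (Ne.symm hkp)]
      exact hp
    · rw [Function.update_of_ne (Ne.symm hkp)]
      by_cases hmk : m = k
      · subst hmk; simp at hm
      · rw [Function.update_of_ne hmk] at hm ⊢
        rw [Function.update_of_ne hmk] at hm
        exact hpm m hm

/-! ### Compression and the induction on the dimension -/

/-- Every down-set of `X_{n+1}` is built from its slices. -/
theorem exists_slicing {n : ℕ} (hn : 2 ≤ n) {D : Finset (Fin (n + 1) → ℕ)} (hD : Down D)
    (hX : ∀ x ∈ D, HasZero x) (i : Fin (n + 1)) :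
    ∃ L K N, IsSlicing L K N ∧ D = build i L K N := by
  classical
  let L : ℕ → Finset (Fin n → ℕ) := fun a =>
    (D.image i.removeNth).filter fun x => HasZero x ∧ ins i a x ∈ D
  let K : Finset (Fin n → ℕ) :=
    (D.image i.removeNth).filter fun x => ¬ HasZero x ∧ ins i 0 x ∈ D
  have mem_L : ∀ a x, x ∈ L a ↔ HasZero x ∧ ins i a x ∈ D := by
    intro a x
    simp only [L, Finset.mem_filter, Finset.mem_image, and_iff_right_iff_imp]
    exact fun h => ⟨_, h.2, Fin.removeNth_insertNth (α := fun _ => ℕ) i a x⟩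
  have mem_K : ∀ x, x ∈ K ↔ ¬ HasZero x ∧ ins i 0 x ∈ D := by
    intro x
    simp only [K, Finset.mem_filter, Finset.mem_image, and_iff_right_iff_imp]
    exact fun h => ⟨_, h.2, Fin.removeNth_insertNth (α := fun _ => ℕ) i 0 x⟩
  have hdown : ∀ a b x y, ins i a x ∈ D → b ≤ a → (∀ k, y k ≤ x k) → ins i b y ∈ D := by
    intro a b x y hx hba hyx
    refine hD _ hx _ ?_
    rw [Fin.forall_iff_succAbove i]
    simpa using ⟨hba, hyx⟩
  have hs : IsSlicing L K (∑ x ∈ D, ∑ i, x i + 1) := by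
    refine ⟨fun a x hx => ((mem_L a x).1 hx).1, fun a x hx y hyx => ?_, fun a b hab x hx => ?_,
      fun a ha => ?_, fun x hx => ?_, fun x hx y hy hyx => ?_⟩
    · rw [mem_L] at hx ⊢
      obtain ⟨⟨k, hk⟩, hx⟩ := hx
      exact ⟨⟨k, by have := hyx k; omega⟩, hdown a a x y hx le_rfl hyx⟩
    · rw [mem_L] at hx ⊢
      exact ⟨hx.1, hdown b a x x hx.2 hab fun _ => le_rfl⟩
    · rw [Finset.eq_empty_iff_forall_notMem]
      intro x hx
      have := coord_le ((mem_L a x).1 hx).2 i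
      simp only [Fin.insertNth_apply_same] at this
      omega
    · rw [mem_K] at hx
      rw [mem_corner hn]
      refine ⟨fun k => Nat.pos_of_ne_zero fun h => hx.1 ⟨k, h⟩, fun k => ?_⟩
      rw [mem_L]
      refine ⟨⟨k, by simp⟩, hdown 0 0 x _ hx.2 le_rfl fun m => ?_⟩
      by_cases h : m = k
      · subst h; simp
      · simp [h]
    · rw [mem_K] at hx ⊢
      exact ⟨hy, hdown 0 0 x y hx.2 le_rfl hyx⟩
  refine ⟨L, K, _, hs, ?_⟩
  ext u
  obtain ⟨a, x, rfl⟩ := exists_ins i u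
  rw [hs.ins_mem, mem_L, mem_K]
  constructor
  · intro h
    by_cases hx : HasZero x
    · exact .inl ⟨hx, h⟩
    · obtain rfl := ((hasZero_ins i a x).1 (hX _ h)).resolve_right hx
      exact .inr ⟨rfl, hx, h⟩
  · rintro (h | ⟨rfl, h⟩)
    · exact h.2
    · exact h.2

/-- Slices which are lower sets make the set compressed in direction `i`. -/
theorem comp_of_slices {n : ℕ} (hn : 2 ≤ n) {L : ℕ → Finset (Fin n → ℕ)}
    {K : Finset (Fin n → ℕ)} {N : ℕ} (h : IsSlicing L K N) (hL : ∀ a, Init (L a))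
    (hK : ∀ x ∈ K, ∀ y, ¬ HasZero y → code y < code x → y ∈ K) (i : Fin (n + 1))
    (x y : Fin (n + 1) → ℕ) (hy : y ∈ build i L K N) (hxy : BLT x y) (hi : x i = y i)
    (hz : ((∃ j, j ≠ i ∧ x j = 0) ∧ ∃ j, j ≠ i ∧ y j = 0) ∨
      (x i = 0 ∧ (∀ j, j ≠ i → 0 < x j) ∧ ∀ j, j ≠ i → 0 < y j)) : x ∈ build i L K N := by
  obtain ⟨a, x, rfl⟩ := exists_ins i x
  obtain ⟨b, y, rfl⟩ := exists_ins i y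
  obtain rfl : a = b := by simpa using hi
  rw [BLT_ins, ← code_lt_iff] at hxy
  simp only [Fin.exists_iff_succAbove i, Fin.forall_iff_succAbove i, ne_eq, not_true_eq_false,
    false_and, false_or, Fin.succAbove_ne, not_false_eq_true, true_and, false_imp_iff,
    forall_const, Fin.insertNth_apply_same, Fin.insertNth_apply_succAbove] at hz
  rw [h.ins_mem] at hy ⊢
  rcases hz with ⟨hzx, hzy⟩ | ⟨rfl, hpx, hpy⟩
  · rcases hy with hy | hy
    · exact .inl ((hL a).2 y hy x hzx hxy)
    · exact absurd hzy (h.not_hasZero hn hy.2)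
  · refine .inr ⟨rfl, ?_⟩
    have hny : ¬ HasZero y := fun ⟨k, hk⟩ => (hpy k).ne' hk
    have hnx : ¬ HasZero x := fun ⟨k, hk⟩ => (hpx k).ne' hk
    rcases hy with hy | hy
    · exact absurd (h.hasZero _ _ hy) hny
    · exact hK y hy.2 x hnx hxy

theorem card_inter_le {α : Type*} [DecidableEq α] {A B A' B' : Finset α}
    (h : A' ⊆ B' ∨ B' ⊆ A') (hA : A.card = A'.card) (hB : B.card ≤ B'.card) :
    (A ∩ B).card ≤ (A' ∩ B').card := by
  rcases h with h | h
  · rw [Finset.inter_eq_left.2 h, ← hA]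
    exact Finset.card_le_card Finset.inter_subset_left
  · rw [Finset.inter_eq_right.2 h]
    exact (Finset.card_le_card Finset.inter_subset_right).trans hB

/-- Every down-set of `X_n` is dominated by an initial segment of the same size, which has no more
zeros and no smaller a corner set. -/
def HasOptimalInit (n : ℕ) : Prop :=
  ∀ D : Finset (Fin n → ℕ), Down D → (∀ x ∈ D, HasZero x) →
    ∃ I : Finset (Fin n → ℕ), Init I ∧ I.card = D.card ∧ zeroSum I ≤ zeroSum D ∧
      (corner D).card ≤ (corner I).card

/-- Replacing all slices in a direction by initial segments gives a better set unless they already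
are initial segments. -/
theorem better_or_comp {n : ℕ} (hn : 2 ≤ n) (IH : HasOptimalInit n)
    {D : Finset (Fin (n + 1) → ℕ)} (hD : Down D) (hX : ∀ x ∈ D, HasZero x) :
    (∃ D', Better D' D) ∨ Comp D := by
  by_contra! hcon
  obtain ⟨hnb, hnc⟩ := hcon
  refine hnc fun i => ?_
  obtain ⟨L, K, N, hs, hDe⟩ := exists_slicing hn hD hX i
  choose I hI hIc hIz hIs using fun a => IH (L a) (hs.down a) (hs.hasZero a)
  obtain ⟨K', hK'sub, hK'c, hK'low⟩ := exists_lower_subset code (corner (I 0))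
    ((Finset.card_le_card hs.sub).trans (hIs 0))
  have hposc : ∀ a, ∀ x ∈ corner (I a), ¬ HasZero x := by
    rintro a x hx ⟨k, hk⟩
    have := ((mem_corner hn).1 hx).1 k
    omega
  have hK'l : ∀ x ∈ K', ∀ y, ¬ HasZero y → code y < code x → y ∈ K' := fun x hx y hy hyx =>
    hK'low x hx y (corner_lower hn (hI 0) x (hK'sub hx) y hy hyx) hyx
  have hs' : IsSlicing I K' N := by
    refine ⟨fun a => (hI a).1, fun a => (hI a).down, fun a b hab => ?_, fun a ha => ?_, hK'sub,
      fun x hx y hy hyx => ?_⟩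
    · refine subset_of_card_le code_injective (hI b).1 (hI a).1 (hI b).2 (hI a).2 ?_
      rw [hIc, hIc]
      exact Finset.card_le_card (hs.anti a b hab)
    · rw [← Finset.card_eq_zero, hIc, hs.empty a ha, Finset.card_empty]
    · rcases (code_le_of_le hyx).lt_or_eq with h | h
      · exact hK'l x hx y hy h
      · rwa [code_injective h]
  by_cases heq : (∀ a, I a = L a) ∧ K' = K
  · obtain ⟨h1, rfl⟩ := heq
    obtain rfl : I = L := funext h1
    rw [hDe]
    exact comp_of_slices hn hs hI hK'l i
  refine absurd ⟨hs'.build_down hn i, hs'.build_hasZero i, ?_, ?_, ?_, ?_⟩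
    (hnb (build i I K' N))
  · rw [hDe, card_build i N (hs.disj hn), card_build i N (hs'.disj hn), hK'c]
    simp only [hIc]
  · rw [hDe, hs.zeroSum_build hn, hs'.zeroSum_build hn, hK'c]
    simp only [hIc]
    gcongr with a ha
    exact hIz a
  · rw [hDe, hs.card_corner_build hn, hs'.card_corner_build hn]
    refine Finset.sum_le_sum fun a _ => ?_
    split_ifs
    · exact le_rfl
    · refine card_inter_le ?_ hK'c.symm (hIs a)
      rcases le_total K'.card (corner (I a)).card with h | h
      · exact .inl (subset_of_card_le code_injective (fun x hx => hposc 0 x (hK'sub hx))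
          (hposc a) hK'l (corner_lower hn (hI a)) h)
      · exact .inr (subset_of_card_le code_injective (hposc a)
          (fun x hx => hposc 0 x (hK'sub hx)) (corner_lower hn (hI a)) hK'l h)
  · rw [hDe, sum_build i N (hs.disj hn), sum_build i N (hs'.disj hn)]
    have hmono : ∀ (a : ℕ) (x y : Fin n → ℕ), code x < code y →
        code (ins i a x) < code (ins i a y) := fun a x y h => by
      rw [code_lt_iff] at h ⊢
      exact BLT_ins.2 h
    have hLle : ∀ a ∈ Finset.range N, ∑ x ∈ I a, code (ins i a x) ≤ ∑ x ∈ L a, code (ins i a x) :=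
      fun a _ => sum_le_of_lower code_injective (hs.hasZero a) (hI a).2 (hIc a) (hmono a)
    have hKpos : ∀ x ∈ K, ¬ HasZero x := fun x hx => hs.not_hasZero hn hx
    by_cases hK : K' = K
    · have hne : ∃ a, I a ≠ L a := by
        by_contra! h
        exact heq ⟨h, hK⟩
      obtain ⟨a, ha⟩ := hne
      rw [hK]
      refine Nat.add_lt_add_right (Finset.sum_lt_sum hLle ⟨a, ?_, ?_⟩) _
      · rw [Finset.mem_range]
        by_contra h
        exact ha (by rw [hs.empty a (by omega), hs'.empty a (by omega)])
      · exact sum_lt_of_lower code_injective (hs.hasZero a) (hI a).2 (hIc a) ha (hmono a)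
    · exact Nat.add_lt_add_of_le_of_lt (Finset.sum_le_sum hLle)
        (sum_lt_of_lower code_injective hKpos hK'l hK'c hK (hmono 0))

/-- In dimension two being a down-set suffices: points sharing a coordinate are comparable. -/
theorem comp_two {D : Finset (Fin 2 → ℕ)} (hD : Down D) : Comp D := by
  intro i x y hy hxy hi hz
  obtain ⟨p, hp, -⟩ := hxy
  refine hD y hy x fun m => ?_
  have : ∀ i p m : Fin 2, p ≠ i → m ≠ i → m = p := by decide
  by_cases hm : m = i
  · rw [hm, hi]
  · rw [this i p m (by rintro rfl; omega) hm]
    exact hp.le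

theorem hasOptimalInit_of_step {n : ℕ} (hn : 2 ≤ n)
    (h : ∀ D : Finset (Fin n → ℕ), Down D → (∀ x ∈ D, HasZero x) →
      (∃ D', Better D' D) ∨ Comp D) : HasOptimalInit n := by
  intro D hD hX
  induction hc : ∑ x ∈ D, code x using Nat.strong_induction_on generalizing D with
  | _ c ih =>
    subst hc
    have hB : (∃ D', Better D' D) → ∃ I : Finset (Fin n → ℕ), Init I ∧ I.card = D.card ∧
        zeroSum I ≤ zeroSum D ∧ (corner D).card ≤ (corner I).card := by
      rintro ⟨D', hD'⟩
      obtain ⟨I, h1, h2, h3, h4⟩ := ih _ hD'.code_lt D' hD'.down hD'.hasZero rfl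
      exact ⟨I, h1, h2.trans hD'.card_eq, h3.trans hD'.zeroSum_le, hD'.corner_le.trans h4⟩
    rcases h D hD hX with hb | hC
    · exact hB hb
    · by_cases hI : Init D
      · exact ⟨D, hI, rfl, le_rfl, le_rfl⟩
      · exact hB (exists_swap hn hD hX hC hI)

theorem hasOptimalInit {n : ℕ} (hn : 2 ≤ n) : HasOptimalInit n := by
  induction n, hn using Nat.le_induction with
  | base => exact hasOptimalInit_of_step le_rfl fun D hD _ => .inr (comp_two hD)
  | succ n hn ih =>
    exact hasOptimalInit_of_step (by omega) fun D hD hX => better_or_comp hn ih hD hX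

/-! ### From weak antichains to down-sets of `X_n` -/

/-- The effect of `push i t` on a point of `A`: it is lowered to height `t` in direction `i` if it is
the lowest point of `A` of height at least `t` on its line. -/
def pushFun {n : ℕ} (i : Fin n) (t : ℕ) (A : Finset (Fin n → ℕ)) (x : Fin n → ℕ) : Fin n → ℕ :=
  if t ≤ x i ∧ ∀ y ∈ A, (∀ j, j ≠ i → y j = x j) → t ≤ y i → x i ≤ y i then
    Function.update x i t else x

/-- On each line in direction `i`, lower the lowest point of `A` of height at least `t` to height
`t`. -/
def push {n : ℕ} (i : Fin n) (t : ℕ) (A : Finset (Fin n → ℕ)) : Finset (Fin n → ℕ) :=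
  A.image (pushFun i t A)

/-- The projection `π_i`, encoded inside the same space by setting the coordinate `i` to `0`. -/
def pr {n : ℕ} (i : Fin n) (A : Finset (Fin n → ℕ)) : Finset (Fin n → ℕ) :=
  A.image fun x => Function.update x i 0

section

variable {n : ℕ} {i : Fin n} {t : ℕ} {A : Finset (Fin n → ℕ)}

theorem pushFun_of_ne {j : Fin n} (h : j ≠ i) (x : Fin n → ℕ) : pushFun i t A x j = x j := by
  unfold pushFun
  split_ifs <;> simp [h]

theorem pushFun_le (x : Fin n → ℕ) (j : Fin n) : pushFun i t A x j ≤ x j := by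
  by_cases h : j = i
  · subst h
    unfold pushFun
    split_ifs with h <;> simp
    exact h.1
  · rw [pushFun_of_ne h]

theorem pushFun_injOn : Set.InjOn (pushFun i t A) A := by
  intro x hx y hy hxy
  rw [Finset.mem_coe] at hx hy
  have hoff : ∀ j, j ≠ i → x j = y j := fun j hj => by
    rw [← pushFun_of_ne (t := t) (A := A) hj x, hxy, pushFun_of_ne hj]
  funext j
  by_cases hj : j = i
  swap
  · exact hoff j hj
  subst hj
  have h := congrFun hxy j
  unfold pushFun at h
  split_ifs at h with h1 h2 h2
  · exact le_antisymm (h1.2 y hy (fun k hk => (hoff k hk).symm) h2.1) (h2.2 x hx hoff h1.1)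
  · rw [Function.update_self] at h
    exact absurd ⟨h.le, fun z _ _ hz => by omega⟩ h2
  · rw [Function.update_self] at h
    exact absurd ⟨h.ge, fun z _ _ hz => by omega⟩ h1
  · exact h

theorem card_push : (push i t A).card = A.card := Finset.card_image_of_injOn pushFun_injOn

theorem mem_push {v : Fin n → ℕ} : v ∈ push i t A ↔
    (v ∈ A ∧ (v i < t ∨ ∃ y ∈ A, (∀ j, j ≠ i → y j = v j) ∧ t ≤ y i ∧ y i < v i)) ∨
      (v i = t ∧ ∃ u ∈ A, (∀ j, j ≠ i → u j = v j) ∧ t ≤ u i) := by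
  simp only [push, Finset.mem_image]
  constructor
  · rintro ⟨x, hx, rfl⟩
    unfold pushFun
    split_ifs with h
    · exact .inr ⟨by simp, x, hx, fun j hj => by simp [hj], h.1⟩
    · refine .inl ⟨hx, ?_⟩
      by_cases hlt : x i < t
      · exact .inl hlt
      · right
        by_contra! hcon
        exact h ⟨not_lt.1 hlt, fun y hy h1 h2 => hcon y hy h1 h2⟩
  · rintro (⟨hv, h⟩ | ⟨hv, u, hu, huv, htu⟩)
    · refine ⟨v, hv, if_neg ?_⟩
      rintro ⟨h1, h2⟩
      rcases h with h | ⟨y, hy, h3, h4, h5⟩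
      · omega
      · have := h2 y hy h3 h4
        omega
    · obtain ⟨w, hw, hmin⟩ := Finset.exists_min_image
        (A.filter fun u => (∀ j, j ≠ i → u j = v j) ∧ t ≤ u i) (fun u => u i)
        ⟨u, Finset.mem_filter.2 ⟨hu, huv, htu⟩⟩
      simp only [Finset.mem_filter, and_imp] at hw hmin
      refine ⟨w, hw.1, ?_⟩
      rw [pushFun, if_pos ⟨hw.2.2, fun y hy h1 h2 =>
        hmin y hy (fun j hj => (h1 j hj).trans (hw.2.1 j hj)) h2⟩]
      funext j
      by_cases hj : j = i
      · subst hj; simp [hv]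
      · simp [hj, hw.2.1 j hj]

/-- For `j ≠ i` the projection of the pushed set is contained in the push of the projection. -/
theorem card_pr_push (j : Fin n) : (pr j (push i t A)).card ≤ (pr j A).card := by
  by_cases hij : i = j
  · subst hij
    refine Finset.card_le_card ?_
    intro v hv
    simp only [pr, push, Finset.mem_image, exists_exists_and_eq_and] at hv ⊢
    obtain ⟨x, hx, rfl⟩ := hv
    refine ⟨x, hx, ?_⟩
    funext k
    by_cases hk : k = i
    · subst hk; simp
    · simp [hk, pushFun_of_ne hk]
  · have hsub : pr j (push i t A) ⊆ push i t (pr j A) := by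
      have hmem : ∀ x ∈ A, Function.update x j 0 ∈ pr j A := fun x hx =>
        Finset.mem_image_of_mem _ hx
      have hline : ∀ x y : Fin n → ℕ, (∀ k, k ≠ i → x k = y k) → ∀ k, k ≠ i →
          Function.update x j 0 k = Function.update y j 0 k := by
        intro x y h k hk
        by_cases hkj : k = j
        · subst hkj; simp
        · simp [hkj, h k hk]
      intro v hv
      obtain ⟨w, hw, rfl⟩ := Finset.mem_image.1 hv
      rw [mem_push] at hw ⊢
      simp only [Function.update_of_ne hij]
      rcases hw with ⟨hw, h⟩ | ⟨hw, u, hu, huw, htu⟩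
      · refine .inl ⟨hmem w hw, ?_⟩
        rcases h with h | ⟨y, hy, h1, h2⟩
        · exact .inl h
        · refine .inr ⟨_, hmem y hy, hline y w h1, ?_⟩
          rwa [Function.update_of_ne hij]
      · refine .inr ⟨hw, _, hmem u hu, hline u w huw, ?_⟩
        rwa [Function.update_of_ne hij]
    exact (Finset.card_le_card hsub).trans card_push.le

end

/-- Apply `push i 0` for all `i` in turn. After the first `k` directions, a point which is still
positive is an original point, and lies above some `z ∈ A`, strictly in the first `k` coordinates
and with equality in the others. -/
theorem exists_hasZero {n : ℕ} {A : Finset (Fin n → ℕ)} (hpos : ∀ x ∈ A, ∀ i, 0 < x i)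
    (hA : ∀ x ∈ A, ∀ y ∈ A, ¬ ∀ i, x i < y i) :
    ∃ B : Finset (Fin n → ℕ), (∀ x ∈ B, HasZero x) ∧ B.card = A.card ∧
      ∀ j, (pr j B).card ≤ (pr j A).card := by
  have key : ∀ k ≤ n, ∃ B : Finset (Fin n → ℕ), B.card = A.card ∧
      (∀ j, (pr j B).card ≤ (pr j A).card) ∧ (∀ x ∈ B, ∀ i : Fin n, k ≤ i → 0 < x i) ∧
      ∀ x ∈ B, (∀ i, 0 < x i) → x ∈ A ∧
        ∃ z ∈ A, (∀ i : Fin n, (i : ℕ) < k → z i < x i) ∧ ∀ i : Fin n, k ≤ i → z i = x i := by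
    intro k
    induction k with
    | zero => exact fun _ => ⟨A, rfl, fun _ => le_rfl, fun x hx i _ => hpos x hx i,
        fun x hx _ => ⟨hx, x, hx, by simp, by simp⟩⟩
    | succ k ih =>
      intro hk
      obtain ⟨B, hc, hpr, hBp, hB⟩ := ih (by omega)
      have hkk : ∀ i : Fin n, i ≠ ⟨k, hk⟩ → (i : ℕ) ≠ k := fun i hi h => hi (Fin.ext h)
      refine ⟨push ⟨k, hk⟩ 0 B, card_push.trans hc, fun j => (card_pr_push j).trans (hpr j),
        fun x hx i hi => ?_, fun x hx hxp => ?_⟩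
      · obtain ⟨y, hy, rfl⟩ := Finset.mem_image.1 hx
        rw [pushFun_of_ne (by rintro rfl; simp at hi)]
        exact hBp y hy i (by omega)
      · rcases mem_push.1 hx with ⟨hxB, h | ⟨y, hy, h1, -, h2⟩⟩ | ⟨h, -⟩
        · omega
        · refine ⟨(hB x hxB hxp).1, ?_⟩
          obtain ⟨-, z, hz, hz1, hz2⟩ := hB y hy fun i => by
            by_cases hi : i = ⟨k, hk⟩
            · subst hi; exact hBp y hy _ le_rfl
            · rw [h1 i hi]; exact hxp i
          refine ⟨z, hz, fun i hi => ?_, fun i hi => ?_⟩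
          · by_cases hik : i = ⟨k, hk⟩
            · subst hik
              rw [hz2 _ le_rfl]; exact h2
            · rw [← h1 i hik]
              exact hz1 i (by have := hkk i hik; omega)
          · rw [hz2 i (by omega), h1 i (by rintro rfl; simp at hi)]
        · have := hxp ⟨k, hk⟩
          omega
  obtain ⟨B, hc, hpr, -, hB⟩ := key n le_rfl
  refine ⟨B, fun x hx => ?_, hc, hpr⟩
  by_contra h
  obtain ⟨hxA, z, hz, hlt, -⟩ := hB x hx fun i => Nat.pos_of_ne_zero fun hi => h ⟨i, hi⟩
  exact hA z hz x hxA fun i => hlt i i.2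

theorem down_of_update {n : ℕ} {D : Finset (Fin n → ℕ)}
    (h : ∀ x ∈ D, ∀ i, ∀ t ≤ x i, Function.update x i t ∈ D) : Down D := by
  intro x hx y hyx
  have key : ∀ s : Finset (Fin n), s.piecewise y x ∈ D := by
    intro s
    induction s using Finset.induction_on with
    | empty => simpa using hx
    | insert i s hi ih =>
      rw [Finset.piecewise_insert]
      refine h _ ih i _ ?_
      rw [Finset.piecewise_eq_of_notMem _ _ _ hi]
      exact hyx i
  simpa using key Finset.univ

/-- Push until the set is stable. -/
theorem exists_down {n : ℕ} {B : Finset (Fin n → ℕ)} (hB : ∀ x ∈ B, HasZero x) :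
    ∃ D : Finset (Fin n → ℕ), Down D ∧ (∀ x ∈ D, HasZero x) ∧ D.card = B.card ∧
      ∀ j, (pr j D).card ≤ (pr j B).card := by
  induction hc : ∑ x ∈ B, code x using Nat.strong_induction_on generalizing B with
  | _ c ih =>
    subst hc
    by_cases hst : ∀ i t, ∀ x ∈ B, pushFun i t B x = x
    · refine ⟨B, down_of_update fun x hx i t ht => ?_, hB, rfl, fun _ => le_rfl⟩
      have hpB : push i t B = B := by
        rw [push, Finset.image_congr (g := id) fun x hx => hst i t x hx, Finset.image_id]
      rw [← hpB, mem_push]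
      exact .inr ⟨by simp, x, hx, fun j hj => by simp [hj], ht⟩
    · push Not at hst
      obtain ⟨i, t, x, hx, hne⟩ := hst
      have hlt : ∑ x ∈ push i t B, code x < ∑ x ∈ B, code x := by
        rw [push, Finset.sum_image pushFun_injOn]
        refine Finset.sum_lt_sum (fun y _ => code_le_of_le (pushFun_le y)) ⟨x, hx, ?_⟩
        exact lt_of_le_of_ne (code_le_of_le (pushFun_le x)) fun h => hne (code_injective h)
      obtain ⟨D, h1, h2, h3, h4⟩ := ih _ hlt (B := push i t B) (fun y hy => by
        obtain ⟨z, hz, rfl⟩ := Finset.mem_image.1 hy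
        obtain ⟨k, hk⟩ := hB z hz
        exact ⟨k, Nat.le_zero.1 (hk ▸ pushFun_le z k)⟩) rfl
      exact ⟨D, h1, h2, h3.trans card_push, fun j => (h4 j).trans (card_pr_push j)⟩

theorem sum_pr_eq_zeroSum {n : ℕ} {D : Finset (Fin n → ℕ)} (hD : Down D) :
    ∑ i, (pr i D).card = zeroSum D := by
  have : ∀ i, pr i D = D.filter fun x => x i = 0 := by
    intro i
    ext x
    simp only [pr, Finset.mem_image, Finset.mem_filter]
    constructor
    · rintro ⟨y, hy, rfl⟩
      refine ⟨hD y hy _ fun j => ?_, by simp⟩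
      by_cases hj : j = i
      · subst hj; simp
      · simp [hj]
    · rintro ⟨hx, hi⟩
      exact ⟨x, hx, by rw [← hi, Function.update_eq_self]⟩
  simp only [this, zeroSum, zeros, Finset.card_filter]
  exact Finset.sum_comm

theorem balancedLT_of_BLT {n : ℕ} {y x : Fin n → ℕ} (h : BLT y x) :
    balancedLT (fun i => (y i : ℤ)) (fun i => (x i : ℤ)) := by
  obtain ⟨p, hp, hpm⟩ := h
  set T := diffSet (fun i => (y i : ℤ)) (fun i => (x i : ℤ)) with hT
  have memT : ∀ i, i ∈ T ↔ y i ≠ x i := fun i => by simp [hT, diffSet]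
  have hpT : p ∈ T := (memT p).2 hp.ne
  have hxmax : ((x p : ℤ) : WithBot ℤ) ≤ maxOn T fun i => (x i : ℤ) :=
    Finset.le_max (Finset.mem_image_of_mem _ hpT)
  have hymax : maxOn T (fun i => (y i : ℤ)) ≤ ((x p : ℤ) : WithBot ℤ) := by
    refine Finset.max_le fun a ha => ?_
    obtain ⟨i, hi, rfl⟩ := Finset.mem_image.1 ha
    have := hpm i ((memT i).1 hi)
    exact_mod_cast (by omega : y i ≤ x p)
  refine ⟨fun h => hp.ne (by exact_mod_cast congrFun h p), ?_⟩
  rcases (hymax.trans hxmax).lt_or_eq with hlt | heq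
  · exact .inl hlt
  · refine .inr ⟨heq, ?_⟩
    have hx' : maxOn T (fun i => (x i : ℤ)) = ((x p : ℤ) : WithBot ℤ) :=
      le_antisymm (heq ▸ hymax) hxmax
    have h1 : (p : WithBot (Fin n)) ≤ argmaxOn T fun i => (x i : ℤ) :=
      Finset.le_max (Finset.mem_filter.2 ⟨hpT, hx'.symm⟩)
    refine lt_of_lt_of_le ?_ h1
    rw [argmaxOn, heq, hx', Finset.max_eq_sup_withBot, Finset.sup_lt_iff (WithBot.bot_lt_coe p)]
    intro i hi
    obtain ⟨hiT, hi⟩ := Finset.mem_filter.1 hi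
    have hi' : y i = x p := by exact_mod_cast hi
    rcases hpm i ((memT i).1 hiT) with h | h
    · omega
    · exact WithBot.coe_lt_coe.2 h.2

/-- Translation into the positive orthant. -/
theorem exists_nat_antichain {n : ℕ} {A : Finset (Fin n → ℤ)} (hA : IsWeakAntichain A) :
    ∃ B : Finset (Fin n → ℕ), (∀ x ∈ B, ∀ i, 0 < x i) ∧
      (∀ x ∈ B, ∀ y ∈ B, ¬ ∀ i, x i < y i) ∧ B.card = A.card ∧
      ∀ i, (pr i B).card ≤ (proj i A).card := by
  obtain ⟨c, hc⟩ : ∃ c : ℤ, ∀ x ∈ A, ∀ i, 0 < x i + c := by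
    refine ⟨∑ x ∈ A, ∑ i, |x i| + 1, fun x hx i => ?_⟩
    have h1 := Finset.single_le_sum (f := fun j => |x j|) (fun _ _ => abs_nonneg _)
      (Finset.mem_univ i)
    have h2 := Finset.single_le_sum (f := fun x : Fin n → ℤ => ∑ i, |x i|)
      (fun _ _ => Finset.sum_nonneg fun _ _ => abs_nonneg _) hx
    have := neg_abs_le (x i)
    linarith
  refine ⟨A.image fun x i => (x i + c).toNat, ?_, ?_, ?_, fun i => ?_⟩
  · intro z hz i
    obtain ⟨x, hx, rfl⟩ := Finset.mem_image.1 hz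
    have := hc x hx i
    change 0 < (x i + c).toNat
    omega
  · intro u hu v hv h
    obtain ⟨x, hx, rfl⟩ := Finset.mem_image.1 hu
    obtain ⟨y, hy, rfl⟩ := Finset.mem_image.1 hv
    refine hA x hx y hy fun i => ?_
    have := h i
    dsimp only at this
    omega
  · refine Finset.card_image_of_injOn fun x hx y hy h => ?_
    funext i
    have h1 := congrFun h i
    have h2 := hc x hx i
    have h3 := hc y hy i
    omega
  · have : pr i (A.image fun x i => (x i + c).toNat) ⊆ (proj i A).image
        fun u j => if h : j = i then 0 else (u ⟨j, h⟩ + c).toNat := by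
      intro v hv
      simp only [pr, proj, Finset.mem_image, exists_exists_and_eq_and] at hv ⊢
      obtain ⟨x, hx, rfl⟩ := hv
      refine ⟨x, hx, ?_⟩
      funext j
      by_cases hj : j = i
      · subst hj; simp
      · simp [hj, projFun]
    exact (Finset.card_le_card this).trans Finset.card_image_le

/-- An initial segment of `X_n ⊆ ℤ^n`, read with natural-number coordinates. -/
theorem exists_nat_init {n : ℕ} {I : Finset (Fin n → ℤ)} (hI : IsInitSeg I) :
    ∃ J : Finset (Fin n → ℕ), Init J ∧ J.card = I.card ∧
      ∀ i, (proj i I).card ≤ (pr i J).card := by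
  have hcast : ∀ x ∈ I, (fun i => (((x i).toNat : ℕ) : ℤ)) = x := fun x hx => by
    funext i
    exact Int.toNat_of_nonneg ((hI.1 hx).1 i)
  refine ⟨I.image fun x i => (x i).toNat, ⟨fun z hz => ?_, fun z hz y hy hyx => ?_⟩, ?_,
    fun i => ?_⟩
  · obtain ⟨x, hx, rfl⟩ := Finset.mem_image.1 hz
    obtain ⟨i, hi⟩ := (hI.1 hx).2
    exact ⟨i, by simp [hi]⟩
  · obtain ⟨x, hx, rfl⟩ := Finset.mem_image.1 hz
    have h := balancedLT_of_BLT (code_lt_iff.1 hyx)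
    rw [hcast x hx] at h
    obtain ⟨i, hi⟩ := hy
    refine Finset.mem_image.2 ⟨_, hI.2 x hx _ ⟨fun _ => Int.natCast_nonneg _, i, by simp [hi]⟩ h, ?_⟩
    simp
  · refine Finset.card_image_of_injOn fun x hx y hy h => ?_
    rw [← hcast x hx, ← hcast y hy]
    funext i
    exact congrArg _ (congrFun h i)
  · have : proj i I ⊆ (pr i (I.image fun x i => (x i).toNat)).image
        fun u j => ((u j.1 : ℕ) : ℤ) := by
      intro v hv
      obtain ⟨x, hx, rfl⟩ := Finset.mem_image.1 hv
      simp only [pr, Finset.mem_image, exists_exists_and_eq_and]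
      refine ⟨x, hx, ?_⟩
      funext j
      rw [Function.update_of_ne j.2]
      exact congrFun (hcast x hx) j.1
    exact (Finset.card_le_card this).trans Finset.card_image_le

/-- For every `n ≥ 2` and `m ≥ 0`, the initial segment of size `m` of the
balanced order on `X_n` minimises the gap among weak antichains in `ℤ^n` of size `m`. -/
theorem initSeg_minimises_gap_among_weakAntichains (n m : ℕ) (hn : 2 ≤ n)
    (I : Finset (Fin n → ℤ)) (hI : IsInitSeg I) (hIcard : I.card = m)
    (A : Finset (Fin n → ℤ)) (hA : IsWeakAntichain A) (hAcard : A.card = m) :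
    gap I ≤ gap A := by
  obtain ⟨A', hpos, hanti, hA'c, hA'p⟩ := exists_nat_antichain hA
  obtain ⟨B, hBX, hBc, hBp⟩ := exists_hasZero hpos hanti
  obtain ⟨D, hD, hDX, hDc, hDp⟩ := exists_down hBX
  obtain ⟨J, hJ, hJc, hJz, -⟩ := hasOptimalInit hn D hD hDX
  obtain ⟨I', hI', hI'c, hI'p⟩ := exists_nat_init hI
  have hIJ : I' ⊆ J := subset_of_card_le code_injective hI'.1 hJ.1 hI'.2 hJ.2 (by omega)
  obtain rfl : I' = J := Finset.eq_of_subset_of_card_le hIJ (by omega)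
  have key : ∑ i, (proj i I).card ≤ ∑ i, (proj i A).card :=
    calc ∑ i, (proj i I).card ≤ ∑ i, (pr i I').card := Finset.sum_le_sum fun i _ => hI'p i
      _ = zeroSum I' := sum_pr_eq_zeroSum hJ.down
      _ ≤ zeroSum D := hJz
      _ = ∑ i, (pr i D).card := (sum_pr_eq_zeroSum hD).symm
      _ ≤ ∑ i, (proj i A).card := Finset.sum_le_sum fun i _ =>
          (hDp i).trans ((hBp i).trans (hA'p i))
  unfold gap
  rw [hIcard, hAcard]
  exact sub_le_sub_right (by exact_mod_cast key) _

end ProjWA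
end
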